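/- Let ρ be a density operator on H = H_1 ⊗ … ⊗ H_n and N = {N_j} a neighborhood structure. If both (i) span(ρ) = ∩_j [F_{ρ_{N_j}}(Σ_{N_j}(ρ)) ⊗ B(H_{N̄_j})] and (ii) supp(ρ) = ∩_j supp(ρ_{N_j} ⊗ I_{N̄_j}), then ρ is FFQLS relative to N. -/

import Mathlib

namespace QDS

open Matrix
open scoped ComplexOrder

/-! ### Basic single-system notions -/

section Single

variable {ι : Type*} [Fintype ι] [DecidableEq ι]

open Classical in
/-- The (unique) positive-semidefinite square root of a positive-semidefinite matrix
(junk value `0` if no positive-semidefinite square root exists). -/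
noncomputable def msqrt (A : Matrix ι ι ℂ) : Matrix ι ι ℂ :=
  if h : ∃ B : Matrix ι ι ℂ, B.PosSemidef ∧ B * B = A then h.choose else 0

open Classical in
/-- The Moore–Penrose pseudoinverse of a matrix, defined via its characterizing
properties (it always exists and is unique for complex matrices). -/
noncomputable def mpinv (A : Matrix ι ι ℂ) : Matrix ι ι ℂ :=
  if h : ∃ B : Matrix ι ι ℂ,
      A * B * A = A ∧ B * A * B = B ∧ (A * B)ᴴ = A * B ∧ (B * A)ᴴ = B * A
  then h.choose else 0

/-- A density operator: positive semidefinite with unit trace. -/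
def IsDensity (ρ : Matrix ι ι ℂ) : Prop := ρ.PosSemidef ∧ ρ.trace = 1

/-- A CPTP map in Kraus (operator-sum) form. -/
def IsCPTP (T : Matrix ι ι ℂ →ₗ[ℂ] Matrix ι ι ℂ) : Prop :=
  ∃ (m : ℕ) (M : Fin m → Matrix ι ι ℂ),
    (∀ X, T X = ∑ k, M k * X * (M k)ᴴ) ∧ (∑ k, (M k)ᴴ * M k) = 1

/-- The Lindblad (QDS) generator with Hamiltonian `Hm` and noise operators `Lk`:
`L(X) = -i[Hm, X] + Σₖ (Lₖ X Lₖ† - ½{Lₖ†Lₖ, X})`. -/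
noncomputable def lindbladMap (Hm : Matrix ι ι ℂ) {m : ℕ} (Lk : Fin m → Matrix ι ι ℂ) :
    Matrix ι ι ℂ →ₗ[ℂ] Matrix ι ι ℂ :=
  (-Complex.I) • (LinearMap.mulLeft ℂ Hm - LinearMap.mulRight ℂ Hm) +
    ∑ k, ((LinearMap.mulRight ℂ (Lk k)ᴴ).comp (LinearMap.mulLeft ℂ (Lk k)) -
      ((1 : ℂ)/2) • (LinearMap.mulLeft ℂ ((Lk k)ᴴ * Lk k) +
        LinearMap.mulRight ℂ ((Lk k)ᴴ * Lk k)))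

/-- `L` is a QDS (Lindblad) generator. -/
def IsLindblad (L : Matrix ι ι ℂ →ₗ[ℂ] Matrix ι ι ℂ) : Prop :=
  ∃ Hm : Matrix ι ι ℂ, Hm.IsHermitian ∧
    ∃ (m : ℕ) (Lk : Fin m → Matrix ι ι ℂ), L = lindbladMap Hm Lk

/-- `Ld` is the Hilbert–Schmidt adjoint of `L` (w.r.t. `⟨X,Y⟩ = Tr(X†Y)`). -/
def IsHSAdjoint (L Ld : Matrix ι ι ℂ →ₗ[ℂ] Matrix ι ι ℂ) : Prop :=
  ∀ X Y : Matrix ι ι ℂ, ((Ld X)ᴴ * Y).trace = (Xᴴ * L Y).trace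

/-- The fixed-point set of a (super)operator. -/
def fixSet (T : Matrix ι ι ℂ →ₗ[ℂ] Matrix ι ι ℂ) : Set (Matrix ι ι ℂ) := {X | T X = X}

/-- The support of an operator: the orthogonal complement of its kernel,
equivalently the range of its adjoint. -/
noncomputable def msupp (A : Matrix ι ι ℂ) : Submodule ℂ (ι → ℂ) := LinearMap.range (Aᴴ).mulVecLin

/-- The support of a set of operators: the span of the union of their supports. -/
noncomputable def suppSet (W : Set (Matrix ι ι ℂ)) : Submodule ℂ (ι → ℂ) := ⨆ O ∈ W, msupp O

/-- The minimal modular-invariant distorted algebra generated by `W` relative to `ρ`: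
the smallest subspace containing `W` that is closed under the adjoint, under the
`ρ`-modified product `(X,Y) ↦ X ρ⁻ Y`, and under the modular map `X ↦ ρ^{1/2} X ρ⁻^{1/2}`. -/
noncomputable def Fdist (ρ : Matrix ι ι ℂ) (W : Set (Matrix ι ι ℂ)) :
    Submodule ℂ (Matrix ι ι ℂ) :=
  sInf {S : Submodule ℂ (Matrix ι ι ℂ) | W ⊆ S ∧ (∀ X ∈ S, Xᴴ ∈ S) ∧
    (∀ X ∈ S, ∀ Y ∈ S, X * mpinv ρ * Y ∈ S) ∧
    (∀ X ∈ S, msqrt ρ * X * mpinv (msqrt ρ) ∈ S)}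

/-- `ρ` is globally asymptotically stable for the generator `L`: it is invariant and every
solution of `ẋ = L(x)` starting at a density operator converges to `ρ` as `t → ∞`. -/
def IsGAS (L : Matrix ι ι ℂ →ₗ[ℂ] Matrix ι ι ℂ) (ρ : Matrix ι ι ℂ) : Prop :=
  L ρ = 0 ∧
  ∀ σ : Matrix ι ι ℂ, IsDensity σ →
    ∀ x : ℝ → Matrix ι ι ℂ, x 0 = σ →
      (∀ t : ℝ, ∀ i j, HasDerivAt (fun s : ℝ => x s i j) (L (x t) i j) t) →
      ∀ i j, Filter.Tendsto (fun t : ℝ => x t i j) Filter.atTop (nhds (ρ i j))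

end Single

/-! ### Bipartite notions -/

section Bipartite

variable {α β : Type*} [Fintype α] [Fintype β] [DecidableEq α] [DecidableEq β]

/-- Partial trace over the second factor. -/
noncomputable def ptraceB (ρ : Matrix (α × β) (α × β) ℂ) : Matrix α α ℂ :=
  Matrix.of fun i j => ∑ k : β, ρ (i, k) (j, k)

/-- The operator Schmidt span of `ρ` on the first factor:
`{Tr_B[(I ⊗ B) ρ] : B ∈ B(H_B)}`. -/
noncomputable def opSchmidtA (ρ : Matrix (α × β) (α × β) ℂ) : Set (Matrix α α ℂ) :=
  {A | ∃ B : Matrix β β ℂ,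
    A = ptraceB ((Matrix.kroneckerMap (· * ·) (1 : Matrix α α ℂ) B) * ρ)}

/-- The (vector) Schmidt span of `v ∈ V_A ⊗ V_B` relative to `V_A`: the image of `v`
under partial inner products with vectors of `V_B`. -/
def vSchmidtA (v : α × β → ℂ) : Set (α → ℂ) :=
  {w | ∃ b : β → ℂ, w = fun a => ∑ j, (starRingEnd ℂ) (b j) * v (a, j)}

/-- `Σ_A(v) ⊗ V_B` as a subspace of `V_A ⊗ V_B`. -/
noncomputable def extVSchmidtA (v : α × β → ℂ) : Submodule ℂ (α × β → ℂ) :=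
  Submodule.span ℂ {v' | ∃ w ∈ vSchmidtA v, ∃ b : β → ℂ, v' = fun p => w p.1 * b p.2}

end Bipartite

/-! ### Multipartite notions -/

section Multipartite

variable {n : ℕ} {d : Fin n → Type*} [∀ a, Fintype (d a)] [∀ a, DecidableEq (d a)]

/-- Index type of the neighborhood factor `H_N`. -/
abbrev nbhdIdx (d : Fin n → Type*) (N : Finset (Fin n)) : Type _ :=
  ∀ a : {x : Fin n // x ∈ N}, d a

/-- Index type of the complementary factor `H_N̄`. -/
abbrev nbhdCoIdx (d : Fin n → Type*) (N : Finset (Fin n)) : Type _ :=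
  ∀ a : {x : Fin n // ¬ x ∈ N}, d a

/-- The factorization `H ≃ H_N ⊗ H_N̄` at the level of index types. -/
def splitEquiv (d : Fin n → Type*) (N : Finset (Fin n)) :
    (∀ a, d a) ≃ nbhdIdx d N × nbhdCoIdx d N :=
  Equiv.piEquivPiSubtypeProd (fun x => x ∈ N) d

variable (d)

/-- The operator `A ⊗ B` on `H = H_N ⊗ H_N̄`, viewed as an operator on `H`. -/
noncomputable def splitLift (N : Finset (Fin n))
    (A : Matrix (nbhdIdx d N) (nbhdIdx d N) ℂ)
    (B : Matrix (nbhdCoIdx d N) (nbhdCoIdx d N) ℂ) :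
    Matrix (∀ a, d a) (∀ a, d a) ℂ :=
  (Matrix.kroneckerMap (· * ·) A B).submatrix (splitEquiv d N) (splitEquiv d N)

/-- The neighborhood operator `A ⊗ I_N̄` on `H`. -/
noncomputable def nbhdLift (N : Finset (Fin n))
    (A : Matrix (nbhdIdx d N) (nbhdIdx d N) ℂ) : Matrix (∀ a, d a) (∀ a, d a) ℂ :=
  splitLift d N A 1

/-- The operator `I_N ⊗ B` on `H`. -/
noncomputable def coLift (N : Finset (Fin n))
    (B : Matrix (nbhdCoIdx d N) (nbhdCoIdx d N) ℂ) : Matrix (∀ a, d a) (∀ a, d a) ℂ :=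
  splitLift d N 1 B

/-- The reduced state `ρ_N = Tr_N̄(ρ)` on the neighborhood `N`. -/
noncomputable def nbhdPtrace (N : Finset (Fin n)) (ρ : Matrix (∀ a, d a) (∀ a, d a) ℂ) :
    Matrix (nbhdIdx d N) (nbhdIdx d N) ℂ :=
  Matrix.of fun i j => ∑ k : nbhdCoIdx d N,
    ρ ((splitEquiv d N).symm (i, k)) ((splitEquiv d N).symm (j, k))

/-- The operator Schmidt span of `ρ` on the neighborhood `N`:
`Σ_N(ρ) = {Tr_N̄[(I_N ⊗ B) ρ] : B}`. -/
noncomputable def nbhdSchmidt (N : Finset (Fin n)) (ρ : Matrix (∀ a, d a) (∀ a, d a) ℂ) :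
    Set (Matrix (nbhdIdx d N) (nbhdIdx d N) ℂ) :=
  {A | ∃ B : Matrix (nbhdCoIdx d N) (nbhdCoIdx d N) ℂ,
    A = nbhdPtrace d N (coLift d N B * ρ)}

/-- The extended minimal modular-invariant distorted algebra
`F_{ρ_N}(Σ_N(ρ)) ⊗ B(H_N̄)` as a subspace of `B(H)`. -/
noncomputable def extF (N : Finset (Fin n)) (ρ : Matrix (∀ a, d a) (∀ a, d a) ℂ) :
    Submodule ℂ (Matrix (∀ a, d a) (∀ a, d a) ℂ) :=
  Submodule.span ℂ {X | ∃ A ∈ Fdist (nbhdPtrace d N ρ) (nbhdSchmidt d N ρ),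
    ∃ B : Matrix (nbhdCoIdx d N) (nbhdCoIdx d N) ℂ, X = splitLift d N A B}

/-- A neighborhood QDS generator for `N`: a Lindblad generator whose Hamiltonian and
noise operators all act as `X_N ⊗ I_N̄`. -/
def IsNbhdGen (N : Finset (Fin n))
    (L : Matrix (∀ a, d a) (∀ a, d a) ℂ →ₗ[ℂ] Matrix (∀ a, d a) (∀ a, d a) ℂ) : Prop :=
  ∃ HN : Matrix (nbhdIdx d N) (nbhdIdx d N) ℂ, HN.IsHermitian ∧
    ∃ (m : ℕ) (Lk : Fin m → Matrix (nbhdIdx d N) (nbhdIdx d N) ℂ),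
      L = lindbladMap (nbhdLift d N HN) fun k => nbhdLift d N (Lk k)

/-- A purely dissipative neighborhood generator for `N` (zero Hamiltonian in some
Lindblad representation). -/
def IsDissipNbhdGen (N : Finset (Fin n))
    (L : Matrix (∀ a, d a) (∀ a, d a) ℂ →ₗ[ℂ] Matrix (∀ a, d a) (∀ a, d a) ℂ) : Prop :=
  ∃ (m : ℕ) (Lk : Fin m → Matrix (nbhdIdx d N) (nbhdIdx d N) ℂ),
    L = lindbladMap 0 fun k => nbhdLift d N (Lk k)

/-- The family of neighborhood generators `Lj` is frustration free: every invariant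
state of the sum is invariant for each component. -/
def IsFFFamily {M : ℕ}
    (Lj : Fin M → (Matrix (∀ a, d a) (∀ a, d a) ℂ →ₗ[ℂ] Matrix (∀ a, d a) (∀ a, d a) ℂ)) :
    Prop :=
  ∀ ρ : Matrix (∀ a, d a) (∀ a, d a) ℂ, IsDensity ρ → (∑ j, Lj j) ρ = 0 → ∀ j, Lj j ρ = 0

/-- `ρ` is frustration-free quasi-locally stabilizable relative to the neighborhood
structure `Nb`. -/
def IsFFQLS {M : ℕ} (Nb : Fin M → Finset (Fin n))
    (ρ : Matrix (∀ a, d a) (∀ a, d a) ℂ) : Prop :=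
  ∃ Lj : Fin M → (Matrix (∀ a, d a) (∀ a, d a) ℂ →ₗ[ℂ] Matrix (∀ a, d a) (∀ a, d a) ℂ),
    (∀ j, IsNbhdGen d (Nb j) (Lj j)) ∧ IsFFFamily d Lj ∧ IsGAS (∑ j, Lj j) ρ

/-- A pure state `|ψ⟩⟨ψ|` is dissipatively quasi-locally stabilizable relative to `Nb`:
it is GAS for a QL generator whose components have zero Hamiltonian and neighborhood
noise operators annihilating `ψ`. -/
def IsDQLS {M : ℕ} (Nb : Fin M → Finset (Fin n)) (ψ : (∀ a, d a) → ℂ) : Prop :=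
  ∃ Lj : Fin M → (Matrix (∀ a, d a) (∀ a, d a) ℂ →ₗ[ℂ] Matrix (∀ a, d a) (∀ a, d a) ℂ),
    (∀ j, ∃ (m : ℕ) (Dk : Fin m → Matrix (nbhdIdx d (Nb j)) (nbhdIdx d (Nb j)) ℂ),
      Lj j = lindbladMap 0 (fun k => nbhdLift d (Nb j) (Dk k)) ∧
      ∀ k, (nbhdLift d (Nb j) (Dk k)).mulVec ψ = 0) ∧
    IsGAS (∑ j, Lj j) (Matrix.vecMulVec ψ (star ψ))

/-- The (vector) Schmidt span of `ψ` relative to the neighborhood factor `H_N`. -/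
def vecSchmidt (N : Finset (Fin n)) (ψ : (∀ a, d a) → ℂ) : Set (nbhdIdx d N → ℂ) :=
  {w | ∃ b : nbhdCoIdx d N → ℂ,
    w = fun i => ∑ k, (starRingEnd ℂ) (b k) * ψ ((splitEquiv d N).symm (i, k))}

/-- `Σ_N(ψ) ⊗ H_N̄` as a subspace of `H`. -/
noncomputable def extVecSchmidt (N : Finset (Fin n)) (ψ : (∀ a, d a) → ℂ) :
    Submodule ℂ ((∀ a, d a) → ℂ) :=
  Submodule.span ℂ {v | ∃ w ∈ vecSchmidt d N ψ, ∃ b : nbhdCoIdx d N → ℂ,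
    v = fun x => w ((splitEquiv d N) x).1 * b ((splitEquiv d N) x).2}

end Multipartite

section Global

variable {ι : Type*} [Fintype ι] [DecidableEq ι]

/-- Spectral decomposition of a Hermitian matrix, in plain matrix form. -/
lemma spec_form {A : Matrix ι ι ℂ} (hA : A.IsHermitian) :
    ∃ (U : Matrix ι ι ℂ) (e : ι → ℝ), Uᴴ * U = 1 ∧ U * Uᴴ = 1 ∧
      A = U * diagonal (fun i => (e i : ℂ)) * Uᴴ ∧ (A.PosSemidef → ∀ i, 0 ≤ e i) := by
  refine ⟨hA.eigenvectorUnitary, hA.eigenvalues, ?_, ?_, ?_, ?_⟩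
  · simpa [star_eq_conjTranspose] using Unitary.coe_star_mul_self hA.eigenvectorUnitary
  · simpa [star_eq_conjTranspose] using Unitary.coe_mul_star_self hA.eigenvectorUnitary
  · have := hA.spectral_theorem
    rw [Unitary.conjStarAlgAut_apply] at this
    exact this
  · intro h i
    exact h.eigenvalues_nonneg i

/-- Top eigenvalue of a nonzero positive semidefinite matrix. -/
lemma exists_top {Z : Matrix ι ι ℂ} (hZ : Z.PosSemidef) (h0 : Z ≠ 0) :
    ∃ z : ℝ, 0 < z ∧ ((z : ℂ) • (1 : Matrix ι ι ℂ) - Z).PosSemidef ∧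
      ∃ v : ι → ℂ, v ≠ 0 ∧ Z *ᵥ v = (z : ℂ) • v := by
  obtain ⟨U, e, h1, h2, hA, hpos⟩ := spec_form hZ.1
  have hpos := hpos hZ
  have hne : Nonempty ι := by
    by_contra h
    rw [not_nonempty_iff] at h
    exact h0 (Subsingleton.elim _ _)
  obtain ⟨i, -, hi⟩ := Finset.exists_max_image Finset.univ e Finset.univ_nonempty
  have hi : ∀ j, e j ≤ e i := fun j => hi j (Finset.mem_univ _)
  have hzpos : 0 < e i := by
    rcases (hpos i).lt_or_eq with h | h
    · exact h
    · exfalso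
      apply h0
      have : e = 0 := by
        funext j
        exact le_antisymm ((hi j).trans h.symm.le) (hpos j)
      rw [hA, this]
      simp
  refine ⟨e i, hzpos, ?_, U *ᵥ Pi.single i 1, ?_, ?_⟩
  · have : ((e i : ℝ) : ℂ) • (1 : Matrix ι ι ℂ) - Z
        = U * diagonal (fun j => ((e i - e j : ℝ) : ℂ)) * Uᴴ := by
      have e1 : diagonal (fun j => ((e i - e j : ℝ) : ℂ))
          = ((e i : ℝ) : ℂ) • (1 : Matrix ι ι ℂ) - diagonal (fun j => (e j : ℂ)) := by
        ext a b
        by_cases hab : a = b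
        · subst hab; simp
        · simp [hab]
      rw [e1, Matrix.mul_sub, Matrix.sub_mul, ← hA]
      simp [h2]
    rw [this]
    apply Matrix.PosSemidef.mul_mul_conjTranspose_same
    rw [posSemidef_diagonal_iff]
    intro j
    rw [Complex.zero_le_real]
    linarith [hi j]
  · intro h
    have h3 : Uᴴ *ᵥ (U *ᵥ Pi.single i 1) = 0 := by rw [h]; simp
    rw [mulVec_mulVec, h1, one_mulVec] at h3
    have := congrFun h3 i
    simp at this
  · rw [hA, mulVec_mulVec, Matrix.mul_assoc, h1, Matrix.mul_one, ← mulVec_mulVec,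
      diagonal_mulVec_single, ← mulVec_smul]
    congr 1
    ext a
    by_cases ha : a = i
    · subst ha; simp
    · simp [ha]

variable {κ : Type*} [Fintype κ]

/-- Schrödinger-picture dissipator. -/
noncomputable def dS (R : κ → Matrix ι ι ℂ) (X : Matrix ι ι ℂ) : Matrix ι ι ℂ :=
  ∑ k, (R k * X * (R k)ᴴ - ((1 : ℂ)/2) • ((R k)ᴴ * R k * X + X * ((R k)ᴴ * R k)))

/-- Heisenberg-picture dissipator. -/
noncomputable def dH (R : κ → Matrix ι ι ℂ) : Matrix ι ι ℂ →ₗ[ℂ] Matrix ι ι ℂ :=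
  ∑ k, ((LinearMap.mulRight ℂ (R k)).comp (LinearMap.mulLeft ℂ (R k)ᴴ) -
      ((1 : ℂ)/2) • (LinearMap.mulLeft ℂ ((R k)ᴴ * R k) +
        LinearMap.mulRight ℂ ((R k)ᴴ * R k)))

lemma dH_apply (R : κ → Matrix ι ι ℂ) (Y : Matrix ι ι ℂ) : dH R Y =
    ∑ k, ((R k)ᴴ * Y * R k - ((1 : ℂ)/2) • ((R k)ᴴ * R k * Y + Y * ((R k)ᴴ * R k))) := by
  simp [dH, LinearMap.sum_apply, Matrix.mul_assoc]

lemma trace_dH (R : κ → Matrix ι ι ℂ) (Y X : Matrix ι ι ℂ) :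
    (dH R Y * X).trace = (Y * dS R X).trace := by
  rw [dH_apply, dS, Finset.sum_mul, Finset.mul_sum, trace_sum, trace_sum]
  refine Finset.sum_congr rfl fun k _ => ?_
  rw [Matrix.sub_mul, Matrix.mul_sub, trace_sub, trace_sub, Matrix.smul_mul, Matrix.mul_smul,
    trace_smul, trace_smul, Matrix.add_mul, Matrix.mul_add, trace_add, trace_add]
  have e1 : ((R k)ᴴ * Y * R k * X).trace = (Y * (R k * X * (R k)ᴴ)).trace := by
    rw [Matrix.mul_assoc, Matrix.mul_assoc, trace_mul_comm]
    simp only [Matrix.mul_assoc]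
  have e2 : ((R k)ᴴ * R k * Y * X).trace = (Y * (X * ((R k)ᴴ * R k))).trace := by
    rw [Matrix.mul_assoc, trace_mul_comm]
    simp only [Matrix.mul_assoc]
  have e3 : (Y * ((R k)ᴴ * R k) * X).trace = (Y * ((R k)ᴴ * R k * X)).trace := by
    simp only [Matrix.mul_assoc]
  rw [e1, e2, e3, add_comm]

lemma dH_one (R : κ → Matrix ι ι ℂ) : dH R 1 = 0 := by
  rw [dH_apply]
  refine Finset.sum_eq_zero fun k _ => ?_
  simp only [Matrix.mul_one, Matrix.one_mul]
  rw [← two_smul ℂ, smul_smul]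
  norm_num

lemma dH_conjTranspose (R : κ → Matrix ι ι ℂ) (Y : Matrix ι ι ℂ) : (dH R Y)ᴴ = dH R Yᴴ := by
  rw [dH_apply, dH_apply, conjTranspose_sum]
  refine Finset.sum_congr rfl fun k _ => ?_
  simp only [conjTranspose_sub, conjTranspose_smul, conjTranspose_add, conjTranspose_mul,
    conjTranspose_conjTranspose, Matrix.mul_assoc]
  rw [add_comm]
  simp

/-- The dissipation identity. -/
lemma dH_diss (R : κ → Matrix ι ι ℂ) (Y : Matrix ι ι ℂ) :
    dH R (Yᴴ * Y) = (dH R Y)ᴴ * Y + Yᴴ * dH R Y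
      + ∑ k, (R k * Y - Y * R k)ᴴ * (R k * Y - Y * R k) := by
  rw [dH_conjTranspose, dH_apply, dH_apply, dH_apply, Finset.sum_mul, Finset.mul_sum,
    ← Finset.sum_add_distrib, ← Finset.sum_add_distrib]
  refine Finset.sum_congr rfl fun k _ => ?_
  simp only [conjTranspose_sub, conjTranspose_mul, Matrix.mul_sub, Matrix.sub_mul, Matrix.mul_add,
    Matrix.add_mul, Matrix.mul_smul, Matrix.smul_mul, Matrix.mul_assoc]
  module

lemma quad_eq (v : ι → ℂ) (C : Matrix ι ι ℂ) :
    star v ⬝ᵥ (Cᴴ * C) *ᵥ v = star (C *ᵥ v) ⬝ᵥ (C *ᵥ v) := by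
  rw [star_mulVec, ← mulVec_mulVec, dotProduct_mulVec]

lemma peripheral (R : κ → Matrix ι ι ℂ) (Y : Matrix ι ι ℂ) (μ : ℂ) (hY : Y ≠ 0)
    (hμ : 0 ≤ μ.re) (h : dH R Y = μ • Y) :
    μ.re = 0 ∧ ∃ V : Submodule ℂ (ι → ℂ), V ≠ ⊥ ∧ (∀ v ∈ V, ∀ k, R k *ᵥ v ∈ V) ∧
      (∀ v ∈ V, ∀ k, Y *ᵥ (R k *ᵥ v) = R k *ᵥ (Y *ᵥ v)) ∧
      (∀ v ∈ V, v ≠ 0 → Y *ᵥ v ≠ 0) := by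
  have hZ := posSemidef_conjTranspose_mul_self Y
  have hZ0 : Yᴴ * Y ≠ 0 := by
    intro h0; exact hY (conjTranspose_mul_self_eq_zero.1 h0)
  obtain ⟨z, hz, hW, v0, hv0, hv0e⟩ := exists_top hZ hZ0
  set W := (z : ℂ) • (1 : Matrix ι ι ℂ) - Yᴴ * Y with hWdef
  have key : ∀ v : ι → ℂ, W *ᵥ v = 0 →
      (∑ k, star ((R k * Y - Y * R k) *ᵥ v) ⬝ᵥ ((R k * Y - Y * R k) *ᵥ v)) +
      (∑ k, star (R k *ᵥ v) ⬝ᵥ (W *ᵥ (R k *ᵥ v))) +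
      ((2 * μ.re * z : ℝ) : ℂ) * (star v ⬝ᵥ v) = 0 := by
    intro v hv
    have hvl : star v ᵥ* W = 0 := by
      have := congrArg star hv
      rw [star_mulVec, hW.1.eq] at this
      simpa using this
    have hZv : (Yᴴ * Y) *ᵥ v = (z : ℂ) • v := by
      have : W *ᵥ v = (z : ℂ) • v - (Yᴴ * Y) *ᵥ v := by
        rw [hWdef, sub_mulVec, smul_mulVec, one_mulVec]
      rw [hv] at this
      exact (sub_eq_zero.1 this.symm).symm
    have e1 : star v ⬝ᵥ (dH R (Yᴴ * Y)) *ᵥ v =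
        ((2 * μ.re * z : ℝ) : ℂ) * (star v ⬝ᵥ v) +
        ∑ k, star ((R k * Y - Y * R k) *ᵥ v) ⬝ᵥ ((R k * Y - Y * R k) *ᵥ v) := by
      rw [dH_diss, h, conjTranspose_smul, Matrix.smul_mul, Matrix.mul_smul, ← add_smul, add_mulVec,
        dotProduct_add, smul_mulVec, hZv, sum_mulVec, dotProduct_sum]
      congr 1
      · rw [dotProduct_smul, dotProduct_smul, smul_eq_mul, smul_eq_mul, ← mul_assoc]
        congr 1
        have : star μ + μ = ((2 * μ.re : ℝ) : ℂ) := by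
          apply Complex.ext <;> simp
          ring
        rw [this]
        push_cast
        ring
      · exact Finset.sum_congr rfl fun k _ => quad_eq _ _
    have e2 : star v ⬝ᵥ (dH R (Yᴴ * Y)) *ᵥ v =
        - ∑ k, star (R k *ᵥ v) ⬝ᵥ (W *ᵥ (R k *ᵥ v)) := by
      have : Yᴴ * Y = (z : ℂ) • (1 : Matrix ι ι ℂ) - W := by rw [hWdef]; abel
      rw [this, map_sub, map_smul, dH_one, smul_zero, zero_sub, neg_mulVec, dotProduct_neg,
        dH_apply, sum_mulVec, dotProduct_sum]
      congr 1
      refine Finset.sum_congr rfl fun k _ => ?_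
      rw [sub_mulVec, smul_mulVec, add_mulVec, dotProduct_sub, dotProduct_smul, dotProduct_add,
        ← mulVec_mulVec v _ W, hv, mulVec_zero, dotProduct_zero,
        dotProduct_mulVec (star v) (W * _), ← vecMul_vecMul, hvl, zero_vecMul, zero_dotProduct,
        add_zero, smul_zero, sub_zero, ← mulVec_mulVec, ← mulVec_mulVec, dotProduct_mulVec,
        ← star_mulVec]
    rw [e1] at e2
    linear_combination e2
  have cnn : ∀ (v : ι → ℂ) k, 0 ≤ star ((R k * Y - Y * R k) *ᵥ v) ⬝ᵥ ((R k * Y - Y * R k) *ᵥ v) :=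
    fun v k => dotProduct_star_self_nonneg _
  have wnn : ∀ (v : ι → ℂ) k, 0 ≤ star (R k *ᵥ v) ⬝ᵥ (W *ᵥ (R k *ᵥ v)) :=
    fun v k => hW.dotProduct_mulVec_nonneg _
  have mnn : ∀ v : ι → ℂ, 0 ≤ ((2 * μ.re * z : ℝ) : ℂ) * (star v ⬝ᵥ v) := fun v =>
    mul_nonneg (by rw [Complex.zero_le_real]; positivity) (dotProduct_star_self_nonneg _)
  have split : ∀ v : ι → ℂ, W *ᵥ v = 0 →
      (∀ k, (R k * Y - Y * R k) *ᵥ v = 0) ∧ (∀ k, W *ᵥ (R k *ᵥ v) = 0) ∧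
      ((2 * μ.re * z : ℝ) : ℂ) * (star v ⬝ᵥ v) = 0 := by
    intro v hv
    have hk := key v hv
    have s1 := Finset.sum_nonneg fun k (_ : k ∈ Finset.univ) => cnn v k
    have s2 := Finset.sum_nonneg fun k (_ : k ∈ Finset.univ) => wnn v k
    have s3 := mnn v
    rw [add_eq_zero_iff_of_nonneg (add_nonneg s1 s2) s3, add_eq_zero_iff_of_nonneg s1 s2,
      Finset.sum_eq_zero_iff_of_nonneg (fun k _ => cnn v k),
      Finset.sum_eq_zero_iff_of_nonneg (fun k _ => wnn v k)] at hk
    refine ⟨fun k => ?_, fun k => ?_, hk.2⟩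
    · exact dotProduct_star_self_eq_zero.1 (hk.1.1 k (Finset.mem_univ _))
    · exact (hW.dotProduct_mulVec_zero_iff _).1 (hk.1.2 k (Finset.mem_univ _))
  have hWv0 : W *ᵥ v0 = 0 := by
    rw [hWdef, sub_mulVec, smul_mulVec, one_mulVec, hv0e, sub_self]
  refine ⟨?_, LinearMap.ker W.mulVecLin, ?_, ?_, ?_, ?_⟩
  · have := (split v0 hWv0).2.2
    rw [mul_eq_zero] at this
    rcases this with h | h
    · have h' : 2 * μ.re * z = 0 := by exact_mod_cast h
      rcases mul_eq_zero.1 h' with h | h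
      · linarith
      · exact absurd h hz.ne'
    · exact absurd (dotProduct_star_self_eq_zero.1 h) hv0
  · intro hbot
    apply hv0
    have : v0 ∈ LinearMap.ker W.mulVecLin := by simpa using hWv0
    rw [hbot] at this
    simpa using this
  · intro v hv k
    simp only [LinearMap.mem_ker, mulVecLin_apply] at hv ⊢
    exact (split v hv).2.1 k
  · intro v hv k
    simp only [LinearMap.mem_ker, mulVecLin_apply] at hv
    have := (split v hv).1 k
    rw [sub_mulVec, sub_eq_zero, ← mulVec_mulVec, ← mulVec_mulVec] at this
    exact this.symm
  · intro v hv hne h0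
    simp only [LinearMap.mem_ker, mulVecLin_apply] at hv
    rw [hWdef, sub_mulVec, smul_mulVec, one_mulVec, ← mulVec_mulVec, h0, mulVec_zero, sub_zero] at hv
    rcases smul_eq_zero.1 hv with h | h
    · exact hz.ne' (by exact_mod_cast h)
    · exact hne h

end Global

section Global2

variable {ι : Type*} [Fintype ι] [DecidableEq ι] {κ : Type*} [Fintype κ]

lemma psd_factor {ρ : Matrix ι ι ℂ} (hρ : ρ.PosSemidef) : ∃ B : Matrix ι ι ℂ, ρ = Bᴴ * B := by
  obtain ⟨U, e, h1, h2, hA, hpos⟩ := spec_form hρ.1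
  have hpos := hpos hρ
  refine ⟨diagonal (fun i => ((Real.sqrt (e i) : ℝ) : ℂ)) * Uᴴ, ?_⟩
  rw [conjTranspose_mul, conjTranspose_conjTranspose, diagonal_conjTranspose, Matrix.mul_assoc,
    ← Matrix.mul_assoc (diagonal _), diagonal_mul_diagonal, hA, Matrix.mul_assoc]
  congr 3
  ext i
  simp only [Pi.star_apply]
  have : (star ((Real.sqrt (e i) : ℝ) : ℂ)) = ((Real.sqrt (e i) : ℝ) : ℂ) := Complex.conj_ofReal _
  rw [this, ← Complex.ofReal_mul, Real.mul_self_sqrt (hpos i)]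

lemma trace_quad_nonneg {ρ : Matrix ι ι ℂ} (hρ : ρ.PosSemidef) (C : Matrix ι ι ℂ) :
    0 ≤ (Cᴴ * C * ρ).trace := by
  rw [Matrix.mul_assoc, trace_mul_comm]
  exact (hρ.mul_mul_conjTranspose_same C).trace_nonneg

lemma trace_quad_zero {ρ : Matrix ι ι ℂ} (hρ : ρ.PosSemidef) (C : Matrix ι ι ℂ)
    (h : (Cᴴ * C * ρ).trace = 0) : C * ρ = 0 := by
  rw [Matrix.mul_assoc, trace_mul_comm,
    (hρ.mul_mul_conjTranspose_same C).trace_eq_zero_iff] at h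
  obtain ⟨B, hB⟩ := psd_factor hρ
  have h1 : (B * Cᴴ)ᴴ * (B * Cᴴ) = 0 := by
    rw [conjTranspose_mul, conjTranspose_conjTranspose, ← h, hB]
    simp only [Matrix.mul_assoc]
  have h2 := conjTranspose_mul_self_eq_zero.1 h1
  have h3 : C * Bᴴ = 0 := by
    have := congrArg conjTranspose h2
    simpa using this
  rw [hB, ← Matrix.mul_assoc, h3, Matrix.zero_mul]

lemma spectral_gap (R : κ → Matrix ι ι ℂ) (ρ : Matrix ι ι ℂ) (hρ : IsDensity ρ)
    (hinv : dS R ρ = 0)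
    (H1 : ∀ V : Submodule ℂ (ι → ℂ), V ≠ ⊥ → (∀ v ∈ V, ∀ k, R k *ᵥ v ∈ V) →
      ∃ v ∈ V, v ≠ 0 ∧ ∃ w, v = ρ *ᵥ w)
    (H2 : ∀ Y : Matrix ι ι ℂ, (∀ k, (R k * Y - Y * R k) * ρ = 0) →
      (∀ k, (R k * Yᴴ - Yᴴ * R k) * ρ = 0) → ∃ c : ℂ, Y * ρ = c • ρ)
    (H3 : ∀ k, R k * ρ = 0 ∨ ∃ (c : ℂ) (k' : κ), (R k)ᴴ = c • R k')
    (Y : Matrix ι ι ℂ) (μ : ℂ) (hY : Y ≠ 0) (hμ : 0 ≤ μ.re) (h : dH R Y = μ • Y) :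
    μ = 0 ∧ ∃ c : ℂ, Y = c • (1 : Matrix ι ι ℂ) := by
  have hμ0 : μ = 0 := by
    obtain ⟨-, V, hV, hinvV, hcomm, hinj⟩ := peripheral R Y μ hY hμ h
    obtain ⟨v, hvV, hv0, w, hw⟩ := H1 V hV hinvV
    have hz : dH R Y *ᵥ v = 0 := by
      rw [dH_apply, sum_mulVec]
      refine Finset.sum_eq_zero fun k _ => ?_
      have e1 : Y *ᵥ ((R k)ᴴ *ᵥ (R k *ᵥ v)) = (R k)ᴴ *ᵥ (R k *ᵥ (Y *ᵥ v)) := by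
        rcases H3 k with h0 | ⟨c, k', hk⟩
        · have : R k *ᵥ v = 0 := by rw [hw, mulVec_mulVec, h0, zero_mulVec]
          rw [← hcomm v hvV k, this]
          simp
        · rw [hk, smul_mulVec, smul_mulVec, mulVec_smul, hcomm _ (hinvV v hvV k), hcomm v hvV]
      rw [sub_mulVec, smul_mulVec, add_mulVec]
      simp only [← mulVec_mulVec]
      rw [hcomm v hvV k, e1, ← two_smul ℂ, smul_smul]
      norm_num
    rw [h, smul_mulVec] at hz
    rcases smul_eq_zero.1 hz with h | h
    · exact h
    · exact absurd h (hinj v hvV hv0)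
  refine ⟨hμ0, ?_⟩
  rw [hμ0, zero_smul] at h
  have comm0 : ∀ Y : Matrix ι ι ℂ, dH R Y = 0 → ∀ k, (R k * Y - Y * R k) * ρ = 0 := by
    intro Y hY k
    have e : (dH R (Yᴴ * Y) * ρ).trace = 0 := by rw [trace_dH, hinv]; simp
    rw [dH_diss, hY] at e
    simp only [conjTranspose_zero, Matrix.zero_mul, Matrix.mul_zero, zero_add,
      Finset.sum_mul, trace_sum] at e
    rw [Finset.sum_eq_zero_iff_of_nonneg (fun k _ => trace_quad_nonneg hρ.1 _)] at e
    exact trace_quad_zero hρ.1 _ (e k (Finset.mem_univ _))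
  have hYs : dH R Yᴴ = 0 := by rw [← dH_conjTranspose, h, conjTranspose_zero]
  obtain ⟨c, hc⟩ := H2 Y (comm0 Y h) (comm0 _ hYs)
  refine ⟨c, ?_⟩
  by_contra hne
  have hne' : Y - c • (1 : Matrix ι ι ℂ) ≠ 0 := sub_ne_zero.2 hne
  have hd : dH R (Y - c • (1 : Matrix ι ι ℂ)) = (0 : ℂ) • (Y - c • (1 : Matrix ι ι ℂ)) := by
    rw [map_sub, map_smul, dH_one, h]; simp
  obtain ⟨-, V, hV, hinvV, -, hinj⟩ := peripheral R _ 0 hne' (by simp) hd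
  obtain ⟨v, hvV, hv0, w, hw⟩ := H1 V hV hinvV
  apply hinj v hvV hv0
  rw [hw, mulVec_mulVec, Matrix.sub_mul, hc]
  simp

/-- Scalar decay estimate. -/
lemma decay_bound (f g : ℝ → ℂ) (μ : ℂ) (hf : ∀ t, HasDerivAt f (μ * f t + g t) t) (k : ℕ) (C : ℝ)
    (hg : ∀ t, 0 ≤ t → ‖g t‖ ≤ C * (1 + t) ^ k * Real.exp (μ.re * t)) :
    ∃ C', ∀ t, 0 ≤ t → ‖f t‖ ≤ C' * (1 + t) ^ (k + 1) * Real.exp (μ.re * t) := by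
  have hC : 0 ≤ C := by
    have := (norm_nonneg _).trans (hg 0 le_rfl)
    simpa using this
  have hder : ∀ t : ℝ, HasDerivAt (fun s : ℝ => Complex.exp (-μ * s) * f s)
      (Complex.exp (-μ * t) * g t) t := by
    intro t
    have h1 : HasDerivAt (fun s : ℝ => Complex.exp (-μ * s)) (Complex.exp (-μ * t) * (-μ * 1)) t :=
      HasDerivAt.cexp (HasDerivAt.const_mul _ (Complex.ofRealCLM.hasDerivAt))
    have e : Complex.exp (-μ * t) * g t = Complex.exp (-μ * t) * (-μ * 1) * f t
        + Complex.exp (-μ * t) * (μ * f t + g t) := by ring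
    rw [e]
    exact h1.mul (hf t)
  have hn : ∀ t : ℝ, ‖Complex.exp (-μ * t)‖ = Real.exp (-(μ.re * t)) := by
    intro t
    rw [Complex.norm_exp]; simp
  have hb : ∀ t : ℝ, 0 ≤ t → ‖Complex.exp (-μ * t) * g t‖ ≤ C * (1 + t) ^ k := by
    intro t ht
    rw [norm_mul, hn]
    calc _ ≤ Real.exp (-(μ.re * t)) * (C * (1 + t) ^ k * Real.exp (μ.re * t)) := by
            gcongr; exact hg t ht
      _ = C * (1 + t) ^ k * (Real.exp (-(μ.re * t)) * Real.exp (μ.re * t)) := by ring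
      _ = _ := by rw [← Real.exp_add]; simp
  refine ⟨‖f 0‖ + C, fun t ht => ?_⟩
  have := norm_image_sub_le_of_norm_deriv_le_segment' (a := 0) (b := t)
    (f := fun s : ℝ => Complex.exp (-μ * s) * f s) (C := C * (1 + t) ^ k)
    (fun x _ => (hder x).hasDerivWithinAt)
    (fun x hx => (hb x hx.1).trans (by have := hx.1; have := hx.2; gcongr)) t ⟨ht, le_rfl⟩
  have e2 : ‖Complex.exp (-μ * t) * f t‖ ≤ (‖f 0‖ + C) * (1 + t) ^ (k + 1) := by
    have h3 : ‖Complex.exp (-μ * t) * f t‖ ≤ ‖f 0‖ + C * (1 + t) ^ k * t := by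
      have h4 := norm_le_norm_add_norm_sub' (Complex.exp (-μ * t) * f t)
        (Complex.exp (-μ * (0:ℝ)) * f 0)
      have h5 : ‖Complex.exp (-μ * (0:ℝ)) * f 0‖ = ‖f 0‖ := by simp
      rw [h5] at h4
      simp only [sub_zero] at this
      linarith
    have h6 : 1 ≤ (1 + t) ^ (k + 1) := one_le_pow₀ (by linarith)
    have h7 : (1 + t) ^ k * t ≤ (1 + t) ^ (k + 1) := by
      rw [pow_succ]; gcongr; linarith
    have := mul_le_mul_of_nonneg_left h6 (norm_nonneg (f 0))
    have := mul_le_mul_of_nonneg_left h7 hC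
    nlinarith
  rw [norm_mul, hn] at e2
  calc ‖f t‖ = Real.exp (-(μ.re * t)) * ‖f t‖ * Real.exp (μ.re * t) := by
        rw [mul_right_comm, ← Real.exp_add]; simp
    _ ≤ _ := by gcongr

lemma poly_exp_tendsto (C : ℝ) (k : ℕ) (a : ℝ) (ha : a < 0) :
    Filter.Tendsto (fun t : ℝ => C * (1 + t) ^ k * Real.exp (a * t)) Filter.atTop (nhds 0) := by
  have h := (Real.tendsto_pow_mul_exp_neg_atTop_nhds_zero k)
  have h1 : Filter.Tendsto (fun t : ℝ => (-a) * (1 + t)) Filter.atTop Filter.atTop :=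
    Filter.Tendsto.const_mul_atTop (by linarith) (Filter.tendsto_atTop_add_const_left _ _ Filter.tendsto_id)
  have h2 := (h.comp h1).const_mul (C * ((-a) ^ k)⁻¹ * Real.exp (-a))
  rw [mul_zero] at h2
  refine h2.congr fun t => ?_
  simp only [Function.comp]
  have hak : (-a) ^ k ≠ 0 := pow_ne_zero _ (by linarith)
  have : Real.exp (a * t) = Real.exp (-a) * Real.exp (-(-a * (1 + t))) := by
    rw [← Real.exp_add]; congr 1; ring
  rw [this, mul_pow]
  field_simp

lemma gen_decay (D : Module.End ℂ (Matrix ι ι ℂ)) (z : ℝ → Matrix ι ι ℂ)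
    (hz : ∀ (Y : Matrix ι ι ℂ) (t : ℝ), HasDerivAt (fun s => (Y * z s).trace) ((D Y * z t).trace) t)
    (μ : ℂ) (k : ℕ) : ∀ Y : Matrix ι ι ℂ, ((D - μ • 1) ^ k) Y = 0 →
      ∃ C, ∀ t, 0 ≤ t → ‖(Y * z t).trace‖ ≤ C * (1 + t) ^ k * Real.exp (μ.re * t) := by
  induction k with
  | zero =>
    intro Y hY
    have : Y = 0 := by simpa using hY
    exact ⟨0, fun t _ => by simp [this]⟩
  | succ k ih =>
    intro Y hY
    obtain ⟨C, hC⟩ := ih ((D - μ • 1) Y) (by rw [pow_succ] at hY; exact hY)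
    refine decay_bound (fun t => (Y * z t).trace) (fun t => ((D - μ • 1) Y * z t).trace) μ ?_ k C hC
    intro t
    convert hz Y t using 1
    simp [Matrix.sub_mul]

theorem gas_of (R : κ → Matrix ι ι ℂ) (L : Matrix ι ι ℂ →ₗ[ℂ] Matrix ι ι ℂ)
    (hL : ∀ X, L X = dS R X) (ρ : Matrix ι ι ℂ) (hρ : IsDensity ρ)
    (hinv : dS R ρ = 0)
    (hspec : ∀ (Y : Matrix ι ι ℂ) (μ : ℂ), Y ≠ 0 → 0 ≤ μ.re → dH R Y = μ • Y →
       μ = 0 ∧ ∃ c : ℂ, Y = c • (1 : Matrix ι ι ℂ)) : IsGAS L ρ := by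
  refine ⟨by rw [hL, hinv], ?_⟩
  intro σ hσ x hx0 hx
  set z : ℝ → Matrix ι ι ℂ := fun t => x t - ρ with hzdef
  have hzd : ∀ t i j, HasDerivAt (fun s => z s i j) (dS R (z t) i j) t := by
    intro t i j
    have h1 : dS R (z t) = L (x t) := by
      rw [← hL, hzdef]; simp only [map_sub]; rw [hL ρ, hinv, sub_zero]
    rw [h1]
    exact (hx t i j).sub_const (ρ i j)
  have hz : ∀ (Y : Matrix ι ι ℂ) (t : ℝ),
      HasDerivAt (fun s => (Y * z s).trace) ((dH R Y * z t).trace) t := by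
    intro Y t
    rw [trace_dH]
    simp only [trace, diag_apply, Matrix.mul_apply]
    exact HasDerivAt.fun_sum fun i _ => HasDerivAt.fun_sum fun j _ => (hzd t j i).const_mul _
  have htr0 : ∀ t, (z t).trace = 0 := by
    have hd : ∀ t, HasDerivAt (fun s => (z s).trace) 0 t := by
      intro t
      have := hz 1 t
      simpa [dH_one] using this
    intro t
    have hc := is_const_of_deriv_eq_zero (fun t => (hd t).differentiableAt)
      (fun t => (hd t).deriv) t 0
    rw [hc, hzdef]
    simp [hx0, hσ.2, hρ.2]
  have hgood : ∀ Y : Matrix ι ι ℂ, Filter.Tendsto (fun t => (Y * z t).trace) Filter.atTop (nhds 0) := by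
    let G : Submodule ℂ (Matrix ι ι ℂ) :=
      { carrier := {Y | Filter.Tendsto (fun t => (Y * z t).trace) Filter.atTop (nhds 0)}
        add_mem' := by
          intro a b ha hb
          have := Filter.Tendsto.add ha hb
          simpa [Matrix.add_mul] using this
        zero_mem' := by simp
        smul_mem' := by
          intro c a ha
          have := Filter.Tendsto.const_mul c ha
          simpa [Matrix.smul_mul] using this }
    have htop : G = ⊤ := by
      rw [eq_top_iff, ← Module.End.iSup_maxGenEigenspace_eq_top (dH R)]
      apply iSup_le
      intro μ Y hY
      rw [Module.End.mem_maxGenEigenspace] at hY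
      obtain ⟨k, hk⟩ := hY
      by_cases hre : μ.re < 0
      · obtain ⟨C, hC⟩ := gen_decay (dH R) z hz μ k Y hk
        show Filter.Tendsto (fun t => (Y * z t).trace) Filter.atTop (nhds 0)
        apply squeeze_zero_norm' _ (poly_exp_tendsto C k μ.re hre)
        filter_upwards [Filter.eventually_ge_atTop 0] with t ht using hC t ht
      · push Not at hre
        have hone : ∀ k : ℕ, ∀ Y : Matrix ι ι ℂ, (((dH R : Module.End ℂ (Matrix ι ι ℂ)) - μ • 1) ^ k) Y = 0 →
            ∃ c : ℂ, Y = c • (1 : Matrix ι ι ℂ) := by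
          intro k
          induction k with
          | zero => intro Y hY; exact ⟨0, by simpa using hY⟩
          | succ k ih =>
            intro Y hY
            by_cases hY0 : Y = 0
            · exact ⟨0, by simp [hY0]⟩
            obtain ⟨c, hc⟩ := ih ((dH R - μ • 1) Y) (by rw [pow_succ] at hY; exact hY)
            have hc' : dH R Y = μ • Y + c • (1 : Matrix ι ι ℂ) := by
              rw [← hc]; simp
            by_cases hc0 : c = 0
            · rw [hc0, zero_smul, add_zero] at hc'
              exact (hspec Y μ hY0 hre hc').2
            · by_cases hμ : μ = 0
              · exfalso
                have e : (dH R Y * ρ).trace = 0 := by rw [trace_dH, hinv]; simp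
                rw [hc', hμ] at e
                simp [hρ.2] at e
                exact hc0 e
              · have hY1 : Y + (c / μ) • (1 : Matrix ι ι ℂ) = 0 := by
                  by_contra hne
                  refine hμ (hspec (Y + (c / μ) • (1 : Matrix ι ι ℂ)) μ hne hre ?_).1
                  rw [map_add, map_smul, dH_one, hc', smul_add, smul_smul, mul_div_cancel₀ _ hμ]
                  simp
                have hY2 : Y = (-(c / μ)) • (1 : Matrix ι ι ℂ) := by
                  rw [neg_smul]; exact eq_neg_of_add_eq_zero_left hY1
                exact ⟨_, hY2⟩
        obtain ⟨c, hc⟩ := hone k Y hk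
        show Filter.Tendsto (fun t => (Y * z t).trace) Filter.atTop (nhds 0)
        rw [hc]
        simp [htr0]
    intro Y
    have : Y ∈ G := by rw [htop]; trivial
    exact this
  intro i j
  have h := hgood (Matrix.single j i 1)
  have h2 : ∀ t, (Matrix.single j i (1:ℂ) * z t).trace = z t i j := by
    intro t
    rw [Matrix.trace_single_mul]; simp
  simp only [h2] at h
  have := h.add_const (ρ i j)
  simpa [hzdef] using this

end Global2

section Local

variable {ι : Type*} [Fintype ι] [DecidableEq ι]

/-- The bilinear trace form. -/
noncomputable def trForm : LinearMap.BilinForm ℂ (Matrix ι ι ℂ) :=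
  LinearMap.mk₂ ℂ (fun X Y => (X * Y).trace) (by intros; simp [Matrix.add_mul]) (by intros; simp)
    (by intros; simp [Matrix.mul_add]) (by intros; simp)

lemma trForm_apply (X Y : Matrix ι ι ℂ) : trForm X Y = (X * Y).trace := rfl

/-- Bicommutant theorem (corner version). -/
lemma bicommutant (A : Submodule ℂ (Matrix ι ι ℂ)) (P : Matrix ι ι ℂ) (hPA : P ∈ A)
    (hl : ∀ a ∈ A, P * a = a) (hr : ∀ a ∈ A, a * P = a)
    (hadj : ∀ a ∈ A, aᴴ ∈ A) (hmul : ∀ a ∈ A, ∀ b ∈ A, a * b ∈ A)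
    (Y : Matrix ι ι ℂ) (hY1 : P * Y = Y) (hY2 : Y * P = Y)
    (hY : ∀ K : Matrix ι ι ℂ, P * K = K → K * P = K → (∀ a ∈ A, a * K = K * a) → Y * K = K * Y) :
    Y ∈ A := by
  have hrefl : (trForm (ι := ι)).IsRefl := by
    intro X Z h
    rw [trForm_apply, trace_mul_comm] at h
    exact h
  have hc : IsCompl A (trForm.orthogonal A) := by
    rw [LinearMap.BilinForm.isCompl_orthogonal_iff_disjoint hrefl, Submodule.disjoint_def]
    intro a ha ho
    have := ho aᴴ (hadj a ha)
    change trForm aᴴ a = 0 at this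
    rw [trForm_apply, trace_conjTranspose_mul_self_eq_zero_iff] at this
    exact this
  set π := A.projection (trForm.orthogonal A) hc with hπ
  have hπA : ∀ X, π X ∈ A := fun X => Submodule.projection_apply_mem hc X
  have hπm : ∀ a ∈ A, ∀ X, π (a * X) = a * π X := by
    intro a ha X
    have e : a * X = a * π X + a * (X - π X) := by rw [← Matrix.mul_add]; simp
    have h1 : X - π X ∈ trForm.orthogonal A := by
      exact Submodule.sub_projection_mem hc X
    have h2 : a * (X - π X) ∈ trForm.orthogonal A := by
      intro n hn
      have := h1 (n * a) (hmul n hn a ha)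
      change trForm (n * a) (X - π X) = 0 at this
      change trForm n (a * (X - π X)) = 0
      rw [trForm_apply] at this ⊢
      rw [← Matrix.mul_assoc]; exact this
    rw [e, map_add, (Submodule.projection_apply_eq_zero_iff hc).2 h2, add_zero]
    exact Submodule.projection_apply_of_mem_left hc (hmul a ha _ (hπA X))
  let T : ι → ι → Matrix ι ι ℂ := fun j l => Matrix.of fun i k => π (Matrix.single k l 1) i j
  have hπT : ∀ X i j, π X i j = ∑ l, (T j l * X) i l := by
    intro X i j
    conv_lhs => rw [Matrix.matrix_eq_sum_single X]
    have hR : ∑ l, (T j l * X) i l = ∑ k, ∑ l, T j l i k * X k l := by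
      simp only [Matrix.mul_apply]
      exact Finset.sum_comm
    rw [hR, map_sum, Matrix.sum_apply]
    refine Finset.sum_congr rfl fun k _ => ?_
    rw [map_sum, Matrix.sum_apply]
    refine Finset.sum_congr rfl fun l _ => ?_
    have : Matrix.single k l (X k l) = X k l • Matrix.single k l (1 : ℂ) := by
      rw [Matrix.smul_single]; simp
    rw [this, map_smul, Matrix.smul_apply, smul_eq_mul, mul_comm]
    rfl
  have hTc : ∀ j l, ∀ a ∈ A, a * T j l = T j l * a := by
    intro j l a ha
    ext i k
    have h1 : (a * T j l) i k = (a * π (Matrix.single k l 1)) i j := by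
      simp [Matrix.mul_apply, T]
    rw [h1, ← hπm a ha]
    have h2 : a * Matrix.single k l (1 : ℂ) = ∑ m, a m k • Matrix.single m l (1 : ℂ) := by
      ext x y
      rw [Matrix.sum_apply]
      by_cases hy : y = l
      · subst hy
        simp [Matrix.single_apply]
      · have hy' : l ≠ y := fun h => hy h.symm
        simp [Matrix.single_apply, hy', hy]
    rw [h2, map_sum, Matrix.sum_apply, Matrix.mul_apply]
    refine Finset.sum_congr rfl fun m _ => ?_
    rw [map_smul, Matrix.smul_apply, smul_eq_mul, mul_comm]
    rfl
  have hPP : P * P = P := hl P hPA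
  have hKc : ∀ j l, Y * (P * T j l * P) = (P * T j l * P) * Y := by
    intro j l
    apply hY
    · rw [← Matrix.mul_assoc, ← Matrix.mul_assoc, hPP]
    · rw [Matrix.mul_assoc, hPP]
    · intro a ha
      rw [← Matrix.mul_assoc, ← Matrix.mul_assoc, hr a ha, hTc j l a ha, Matrix.mul_assoc, hr a ha,
        Matrix.mul_assoc, Matrix.mul_assoc, hl a ha, ← hTc j l a ha, ← Matrix.mul_assoc, hl a ha]
  have hK : ∀ X, P * X = X → ∀ i j, π X i j = ∑ l, ((P * T j l * P) * X) i l := by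
    intro X hX i j
    have h1 : π X = P * π X := (hl _ (hπA X)).symm
    rw [h1, Matrix.mul_apply]
    simp only [hπT, Finset.mul_sum]
    rw [Finset.sum_comm]
    refine Finset.sum_congr rfl fun l _ => ?_
    rw [Matrix.mul_assoc (P * T j l), hX, Matrix.mul_assoc, Matrix.mul_apply]
  have hfin : Y = π Y := by
    have hπP : π P = P := Submodule.projection_apply_of_mem_left hc hPA
    ext i j
    rw [hK Y hY1]
    have h1 : Y i j = (Y * π P) i j := by rw [hπP, hY2]
    rw [h1, Matrix.mul_apply]
    simp only [hK P hPP, Finset.mul_sum]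
    rw [Finset.sum_comm]
    refine Finset.sum_congr rfl fun l _ => ?_
    rw [← hKc, Matrix.mul_assoc (P * T j l), hPP, Matrix.mul_apply]
  rw [hfin]
  exact hπA Y

/-! ### Pseudo-inverses -/

lemma penrose_unique {A B C : Matrix ι ι ℂ} (b1 : A * B * A = A) (b2 : B * A * B = B)
    (b3 : (A * B)ᴴ = A * B) (b4 : (B * A)ᴴ = B * A) (c1 : A * C * A = A) (c2 : C * A * C = C)
    (c3 : (A * C)ᴴ = A * C) (c4 : (C * A)ᴴ = C * A) : B = C := by
  have e1 : A * B = A * C := by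
    calc A * B = (A * B)ᴴ := b3.symm
      _ = (A * C * (A * B))ᴴ := by rw [← Matrix.mul_assoc (A * C), c1]
      _ = A * B * (A * C) := by rw [conjTranspose_mul, b3, c3]
      _ = A * C := by rw [← Matrix.mul_assoc, b1]
  have e2 : B * A = C * A := by
    calc B * A = (B * A)ᴴ := b4.symm
      _ = (B * A * (C * A))ᴴ := by rw [Matrix.mul_assoc, ← Matrix.mul_assoc A C A, c1]
      _ = C * A * (B * A) := by rw [conjTranspose_mul, b4, c4]
      _ = C * A := by rw [Matrix.mul_assoc, ← Matrix.mul_assoc A B A, b1]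
  calc B = B * A * B := b2.symm
    _ = C * A * B := by rw [e2]
    _ = C * A * C := by rw [Matrix.mul_assoc, e1, Matrix.mul_assoc]
    _ = C := c2

lemma mpinv_eq {A B : Matrix ι ι ℂ} (b1 : A * B * A = A) (b2 : B * A * B = B)
    (b3 : (A * B)ᴴ = A * B) (b4 : (B * A)ᴴ = B * A) : mpinv A = B := by
  have hex : ∃ B : Matrix ι ι ℂ,
      A * B * A = A ∧ B * A * B = B ∧ (A * B)ᴴ = A * B ∧ (B * A)ᴴ = B * A := ⟨B, b1, b2, b3, b4⟩
  unfold mpinv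
  rw [dif_pos hex]
  obtain ⟨c1, c2, c3, c4⟩ := hex.choose_spec
  exact penrose_unique c1 c2 c3 c4 b1 b2 b3 b4

lemma conj_mul {U : Matrix ι ι ℂ} (h1 : Uᴴ * U = 1) (X Y : Matrix ι ι ℂ) :
    (U * X * Uᴴ) * (U * Y * Uᴴ) = U * (X * Y) * Uᴴ := by
  calc _ = U * X * (Uᴴ * U) * Y * Uᴴ := by simp only [Matrix.mul_assoc]
    _ = _ := by rw [h1]; simp only [Matrix.mul_assoc, Matrix.one_mul]

lemma conj_herm (U : Matrix ι ι ℂ) (f : ι → ℝ) :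
    (U * diagonal (fun i => (f i : ℂ)) * Uᴴ)ᴴ = U * diagonal (fun i => (f i : ℂ)) * Uᴴ := by
  rw [conjTranspose_mul, conjTranspose_mul, conjTranspose_conjTranspose, diagonal_conjTranspose,
    Matrix.mul_assoc]
  congr 3
  ext i
  simp

lemma mpinv_diag {U : Matrix ι ι ℂ} (h1 : Uᴴ * U = 1) (f : ι → ℝ) :
    mpinv (U * diagonal (fun i => (f i : ℂ)) * Uᴴ)
      = U * diagonal (fun i => (((f i)⁻¹ : ℝ) : ℂ)) * Uᴴ := by
  have hcong : ∀ (a b c : ι → ℝ), (∀ i, a i * b i * c i = a i) →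
      (U * diagonal (fun i => (a i : ℂ)) * Uᴴ) * (U * diagonal (fun i => (b i : ℂ)) * Uᴴ)
        * (U * diagonal (fun i => (c i : ℂ)) * Uᴴ) = U * diagonal (fun i => (a i : ℂ)) * Uᴴ := by
    intro a b c h
    rw [conj_mul h1, conj_mul h1, diagonal_mul_diagonal, diagonal_mul_diagonal]
    congr 3
    ext i
    exact_mod_cast h i
  have hh : ∀ (a b : ι → ℝ),
      ((U * diagonal (fun i => (a i : ℂ)) * Uᴴ) * (U * diagonal (fun i => (b i : ℂ)) * Uᴴ))ᴴ
      = (U * diagonal (fun i => (a i : ℂ)) * Uᴴ) * (U * diagonal (fun i => (b i : ℂ)) * Uᴴ) := by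
    intro a b
    rw [conj_mul h1, diagonal_mul_diagonal]
    have := conj_herm U (fun i => a i * b i)
    push_cast at this
    exact this
  apply mpinv_eq
  · exact hcong f (fun i => (f i)⁻¹) f (fun i => mul_inv_mul_cancel _)
  · refine hcong (fun i => (f i)⁻¹) f (fun i => (f i)⁻¹) (fun i => ?_)
    by_cases hf : f i = 0
    · simp [hf]
    · field_simp
  · exact hh _ _
  · exact hh _ _

/-- All facts about the pseudoinverse, square root, and modular map of a PSD matrix. -/
lemma psd_package {r : Matrix ι ι ℂ} (hr : r.PosSemidef) :
    (mpinv r)ᴴ = mpinv r ∧ r * mpinv r = mpinv r * r ∧ r * mpinv r * r = r ∧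
    mpinv r * r * mpinv r = mpinv r ∧ (msqrt r)ᴴ = msqrt r ∧ msqrt r * msqrt r = r ∧
    (mpinv (msqrt r))ᴴ = mpinv (msqrt r) ∧ mpinv (msqrt r) * mpinv (msqrt r) = mpinv r ∧
    ∀ X : Matrix ι ι ℂ, X ∈ ⨆ μ : ℂ, Module.End.eigenspace
      (((LinearMap.mulRight ℂ (mpinv r)).comp (LinearMap.mulLeft ℂ r) :
        Matrix ι ι ℂ →ₗ[ℂ] Matrix ι ι ℂ) : Module.End ℂ (Matrix ι ι ℂ)) μ := by
  have hex : ∃ B : Matrix ι ι ℂ, B.PosSemidef ∧ B * B = r := by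
    obtain ⟨U, e, h1, h2, hA, hpos⟩ := spec_form hr.1
    have hpos := hpos hr
    refine ⟨U * diagonal (fun i => ((Real.sqrt (e i) : ℝ) : ℂ)) * Uᴴ, ?_, ?_⟩
    · apply Matrix.PosSemidef.mul_mul_conjTranspose_same
      rw [posSemidef_diagonal_iff]
      intro j
      rw [Complex.zero_le_real]
      exact Real.sqrt_nonneg _
    · rw [conj_mul h1, diagonal_mul_diagonal, hA]
      congr 3
      ext i
      rw [← Complex.ofReal_mul, Real.mul_self_sqrt (hpos i)]
  have hs : (msqrt r).PosSemidef ∧ msqrt r * msqrt r = r := by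
    unfold msqrt
    rw [dif_pos hex]
    exact hex.choose_spec
  set s := msqrt r with hsdef
  obtain ⟨hs1, hs2⟩ := hs
  obtain ⟨U, f, h1, h2, hA, -⟩ := spec_form hs1.1
  have ht := mpinv_diag h1 f
  rw [← hA] at ht
  have hrd : r = U * diagonal (fun i => ((f i * f i : ℝ) : ℂ)) * Uᴴ := by
    rw [← hs2, hA, conj_mul h1, diagonal_mul_diagonal]
    congr 3
    ext i
    push_cast; rfl
  have hp := mpinv_diag h1 (fun i => f i * f i)
  rw [← hrd] at hp
  rw [ht, hp]
  refine ⟨conj_herm _ _, ?_, ?_, ?_, hs1.1, hs2, conj_herm _ _, ?_, ?_⟩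
  · rw [hrd, conj_mul h1, conj_mul h1, diagonal_mul_diagonal, diagonal_mul_diagonal]
    congr 3
    ext i
    ring
  · rw [hrd, conj_mul h1, conj_mul h1, diagonal_mul_diagonal, diagonal_mul_diagonal]
    congr 3
    ext i
    exact_mod_cast mul_inv_mul_cancel _
  · rw [hrd, conj_mul h1, conj_mul h1, diagonal_mul_diagonal, diagonal_mul_diagonal]
    congr 3
    ext i
    by_cases hf : f i = 0
    · simp [hf]
    · have : (f i : ℂ) ≠ 0 := by exact_mod_cast hf
      push_cast
      field_simp
  · rw [conj_mul h1, diagonal_mul_diagonal]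
    congr 3
    ext i
    rw [mul_inv]
    push_cast; rfl
  · intro X
    have hX : X = ∑ i, ∑ j, (Uᴴ * X * U) i j • (U * Matrix.single i j 1 * Uᴴ) := by
      have e1 : X = U * (Uᴴ * X * U) * Uᴴ := by
        calc X = (U * Uᴴ) * X * (U * Uᴴ) := by rw [h2]; simp
          _ = _ := by simp only [Matrix.mul_assoc]
      conv_lhs => rw [e1, Matrix.matrix_eq_sum_single (Uᴴ * X * U)]
      rw [Finset.mul_sum, Finset.sum_mul]
      refine Finset.sum_congr rfl fun i _ => ?_
      rw [Finset.mul_sum, Finset.sum_mul]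
      refine Finset.sum_congr rfl fun j _ => ?_
      have : Matrix.single i j ((Uᴴ * X * U) i j) = (Uᴴ * X * U) i j • Matrix.single i j (1 : ℂ) := by
        rw [Matrix.smul_single]; simp
      conv_lhs => rw [this]
      rw [Matrix.mul_smul, Matrix.smul_mul]
    rw [hX]
    refine Submodule.sum_mem _ fun i _ => Submodule.sum_mem _ fun j _ => Submodule.smul_mem _ _ ?_
    refine Submodule.mem_iSup_of_mem (((f i * f i : ℝ) : ℂ) * (((f j * f j)⁻¹ : ℝ) : ℂ)) ?_
    rw [Module.End.mem_eigenspace_iff]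
    simp only [LinearMap.comp_apply, LinearMap.mulLeft_apply, LinearMap.mulRight_apply]
    conv_lhs => rw [hrd]
    rw [conj_mul h1, conj_mul h1, ← Matrix.smul_mul, ← Matrix.mul_smul]
    congr 2
    ext a b
    simp [Matrix.diagonal_mul, Matrix.mul_diagonal, Matrix.single_apply]
    by_cases hab : i = a ∧ j = b
    · obtain ⟨rfl, rfl⟩ := hab; simp
    · simp [hab]

end Local

section Local2

variable {ι : Type*} [Fintype ι] [DecidableEq ι]

lemma local_alg {r : Matrix ι ι ℂ} (hr : r.PosSemidef) (F : Submodule ℂ (Matrix ι ι ℂ))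
    (hrF : r ∈ F) (hadj : ∀ X ∈ F, Xᴴ ∈ F) (hmul : ∀ X ∈ F, ∀ Y ∈ F, X * mpinv r * Y ∈ F)
    (hmod : ∀ X ∈ F, msqrt r * X * mpinv (msqrt r) ∈ F)
    (hPF : ∀ X ∈ F, r * mpinv r * X = X) :
    ∃ (m : ℕ) (lam : Fin m → ℝ) (K : Fin m → Matrix ι ι ℂ), (∀ k, 0 < lam k) ∧
      (∀ k, ∀ X ∈ F, X * K k = (lam k : ℂ) • (K k * X)) ∧
      (∀ Y, r * mpinv r * Y = Y → Y * (r * mpinv r) = Y → (∀ k, Y * K k = K k * Y) →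
        ∀ X ∈ F, Y * X ∈ F) := by
  obtain ⟨hp, hrp, hrpr, hprp, hs, hss, ht, htt, heig⟩ := psd_package hr
  set p := mpinv r with hpdef
  set s := msqrt r
  set t := mpinv s
  have hrh : rᴴ = r := hr.1
  have hPh : (r * p)ᴴ = r * p := by rw [conjTranspose_mul, hp, hrh, hrp]
  have hFP : ∀ X ∈ F, X * (r * p) = X := by
    intro X hX
    have := congrArg conjTranspose (hPF _ (hadj X hX))
    rwa [conjTranspose_mul, conjTranspose_conjTranspose, hPh] at this
  have hm1 : ∀ X ∈ F, r * X * p ∈ F := by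
    intro X hX
    have := hmod _ (hmod X hX)
    have e : s * (s * X * t) * t = (s * s) * X * (t * t) := by simp only [Matrix.mul_assoc]
    rw [e, hss, htt] at this
    exact this
  have hm2 : ∀ X ∈ F, p * X * r ∈ F := by
    intro X hX
    have := hadj _ (hm1 _ (hadj X hX))
    rw [conjTranspose_mul, conjTranspose_mul, conjTranspose_conjTranspose, hp, hrh,
      ← Matrix.mul_assoc] at this
    exact this
  -- the commutant
  let C : Submodule ℂ (Matrix ι ι ℂ) :=
    { carrier := {K | r * p * K = K ∧ K * (r * p) = K ∧ ∀ X ∈ F, X * p * K = K * (X * p)}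
      add_mem' := by
        rintro a b ⟨a1, a2, a3⟩ ⟨b1, b2, b3⟩
        refine ⟨by rw [Matrix.mul_add, a1, b1], by rw [Matrix.add_mul, a2, b2], fun X hX => ?_⟩
        rw [Matrix.mul_add, Matrix.add_mul, a3 X hX, b3 X hX]
      zero_mem' := ⟨by simp, by simp, fun X _ => by simp⟩
      smul_mem' := by
        rintro c a ⟨a1, a2, a3⟩
        refine ⟨by rw [Matrix.mul_smul, a1], by rw [Matrix.smul_mul, a2], fun X hX => ?_⟩
        rw [Matrix.mul_smul, Matrix.smul_mul, a3 X hX] }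
  have hCdef : ∀ K, K ∈ C ↔ (r * p * K = K ∧ K * (r * p) = K ∧ ∀ X ∈ F, X * p * K = K * (X * p)) :=
    fun K => Iff.rfl
  let Δ : Module.End ℂ (Matrix ι ι ℂ) := (LinearMap.mulRight ℂ p).comp (LinearMap.mulLeft ℂ r)
  have hΔ : ∀ K, Δ K = r * K * p := fun K => rfl
  have hΔC : ∀ K ∈ C, Δ K ∈ C := by
    rintro K ⟨k1, k2, k3⟩
    rw [hΔ]
    refine ⟨?_, ?_, ?_⟩
    · calc r * p * (r * K * p) = (r * p * r) * K * p := by simp only [Matrix.mul_assoc]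
        _ = _ := by rw [hrpr]
    · rw [Matrix.mul_assoc, ← Matrix.mul_assoc p, hprp]
    · intro X hX
      have e1 : X * p * r = r * (p * X) := by
        calc X * p * r = X * (r * p) := by rw [Matrix.mul_assoc, hrp]
          _ = X := hFP X hX
          _ = r * p * X := (hPF X hX).symm
          _ = _ := Matrix.mul_assoc _ _ _
      have e2 : p * X = (p * X * r) * p := by
        rw [Matrix.mul_assoc, Matrix.mul_assoc, hFP X hX]
      have e3 := k3 _ (hm2 X hX)
      rw [← e2] at e3
      calc X * p * (r * K * p) = (X * p * r) * K * p := by simp only [Matrix.mul_assoc]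
        _ = r * (p * X * K) * p := by rw [e1]; simp only [Matrix.mul_assoc]
        _ = r * (K * (p * X)) * p := by rw [e3]
        _ = _ := by simp only [Matrix.mul_assoc]
  have htop : ⨆ μ, Module.End.genEigenspace Δ μ 1 = ⊤ := by
    rw [eq_top_iff]
    intro X _
    exact heig X
  have hCsup : C = ⨆ μ, C ⊓ Module.End.genEigenspace Δ μ 1 :=
    Submodule.eq_iSup_inf_genEigenspace 1 (fun x hx => hΔC x hx) htop
  let S : Set (Matrix ι ι ℂ) := {K | K ∈ C ∧ K ≠ 0 ∧ ∃ μ : ℂ, Δ K = μ • K}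
  have hCS : C ≤ Submodule.span ℂ S := by
    rw [hCsup]
    refine iSup_le fun μ => ?_
    rintro K ⟨hK1, hK2⟩
    by_cases h0 : K = 0
    · rw [h0]; exact Submodule.zero_mem _
    · refine Submodule.subset_span ⟨hK1, h0, μ, ?_⟩
      exact Module.End.mem_eigenspace_iff.1 hK2
  obtain ⟨b, hbS, hbspan, hbli⟩ := exists_linearIndependent ℂ S
  have hbfin : b.Finite := hbli.setFinite
  obtain ⟨m, f, hf⟩ := hbfin.fin_param
  have hSprop : ∀ K ∈ S, ∃ μ : ℝ, 0 < μ ∧ ∀ X ∈ F, X * K = (μ : ℂ) • (K * X) := by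
    rintro K ⟨⟨k1, k2, k3⟩, h0, μ, hμ⟩
    rw [hΔ] at hμ
    have htr : (0 : ℂ) < (Kᴴ * K).trace := by
      refine lt_of_le_of_ne (Matrix.posSemidef_conjTranspose_mul_self K).trace_nonneg ?_
      intro h
      exact h0 (trace_conjTranspose_mul_self_eq_zero_iff.1 h.symm)
    have hμnn : 0 ≤ μ * (Kᴴ * K).trace := by
      have e : μ * (Kᴴ * K).trace = ((s * K * t)ᴴ * (s * K * t)).trace := by
        rw [← smul_eq_mul, ← trace_smul, ← Matrix.mul_smul, ← hμ, conjTranspose_mul,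
          conjTranspose_mul, ht, hs]
        calc (Kᴴ * (r * K * p)).trace = (Kᴴ * (s * s) * K * (t * t)).trace := by
              rw [hss, htt]; simp only [Matrix.mul_assoc]
          _ = ((Kᴴ * s * s * K * t) * t).trace := by simp only [Matrix.mul_assoc]
          _ = _ := by rw [trace_mul_comm]; simp only [Matrix.mul_assoc]
      rw [e]
      exact (Matrix.posSemidef_conjTranspose_mul_self _).trace_nonneg
    have hμ0 : μ ≠ 0 := by
      rintro rfl
      apply h0
      rw [zero_smul] at hμ
      calc K = (r * p) * K * (r * p) := by rw [k1, k2]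
        _ = p * (r * K * p) * r := by
            conv_lhs => rw [hrp]
            simp only [Matrix.mul_assoc]
        _ = 0 := by rw [hμ]; simp
    have hμ1 : 0 ≤ μ := by
      have h3 : 0 ≤ μ * (Kᴴ * K).trace * ((Kᴴ * K).trace)⁻¹ :=
        mul_nonneg hμnn (inv_nonneg_of_nonneg htr.le)
      rwa [mul_inv_cancel_right₀ htr.ne'] at h3
    obtain ⟨hre, him⟩ := Complex.nonneg_iff.1 hμ1
    have hμr : ((μ.re : ℝ) : ℂ) = μ := by
      apply Complex.ext
      · simp
      · simpa using him
    refine ⟨μ.re, lt_of_le_of_ne hre ?_, ?_⟩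
    · intro h
      apply hμ0
      rw [← hμr, ← h]; simp
    · intro X hX
      rw [hμr]
      have e1 : r * K = μ • (K * r) := by
        calc r * K = r * (K * (r * p)) := by rw [k2]
          _ = (r * K * p) * r := by rw [hrp]; simp only [Matrix.mul_assoc]
          _ = _ := by rw [hμ, Matrix.smul_mul]
      calc X * K = (X * (r * p)) * K := by rw [hFP X hX]
        _ = X * p * (r * K) := by rw [hrp]; simp only [Matrix.mul_assoc]
        _ = μ • ((X * p * K) * r) := by rw [e1, Matrix.mul_smul]; simp only [Matrix.mul_assoc]
        _ = μ • (K * (X * (r * p))) := by rw [k3 X hX, hrp]; simp only [Matrix.mul_assoc]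
        _ = _ := by rw [hFP X hX]
  have hfS : ∀ k, f k ∈ S := fun k => hbS (hf.2 ▸ Set.mem_range_self k)
  choose lam hlam1 hlam2 using fun k => hSprop (f k) (hfS k)
  refine ⟨m, lam, f, hlam1, hlam2, ?_⟩
  intro Y hY1 hY2 hYK X hX
  have hYC : ∀ K ∈ C, Y * K = K * Y := by
    intro K hK
    have h1 : K ∈ Submodule.span ℂ b := by rw [hbspan]; exact hCS hK
    clear hK
    induction h1 using Submodule.span_induction with
    | mem x hx =>
      rw [← hf.2] at hx
      obtain ⟨k, rfl⟩ := hx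
      exact hYK k
    | zero => simp
    | add x y _ _ hx hy => rw [Matrix.mul_add, Matrix.add_mul, hx, hy]
    | smul c x _ hx => rw [Matrix.mul_smul, Matrix.smul_mul, hx]
  let A : Submodule ℂ (Matrix ι ι ℂ) := F.map (LinearMap.mulRight ℂ p)
  have hA : ∀ a, a ∈ A ↔ ∃ X ∈ F, X * p = a := fun a => Submodule.mem_map
  have hYA : Y ∈ A := by
    apply bicommutant A (r * p) ((hA _).2 ⟨r, hrF, rfl⟩) _ _ _ _ Y hY1 hY2
    · intro K hK1 hK2 hK3
      exact hYC K ⟨hK1, hK2, fun X hX => hK3 _ ((hA _).2 ⟨X, hX, rfl⟩)⟩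
    · intro a ha
      obtain ⟨X, hX, rfl⟩ := (hA a).1 ha
      rw [← Matrix.mul_assoc, hPF X hX]
    · intro a ha
      obtain ⟨X, hX, rfl⟩ := (hA a).1 ha
      rw [Matrix.mul_assoc, ← Matrix.mul_assoc p, hprp]
    · intro a ha
      obtain ⟨X, hX, rfl⟩ := (hA a).1 ha
      refine (hA _).2 ⟨p * Xᴴ * r, hm2 _ (hadj X hX), ?_⟩
      rw [conjTranspose_mul, hp, Matrix.mul_assoc, Matrix.mul_assoc, hFP _ (hadj X hX)]
    · intro a ha b hb
      obtain ⟨X, hX, rfl⟩ := (hA a).1 ha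
      obtain ⟨Z, hZ, rfl⟩ := (hA b).1 hb
      exact (hA _).2 ⟨_, hmul X hX Z hZ, by simp only [Matrix.mul_assoc]⟩
  obtain ⟨X', hX', rfl⟩ := (hA Y).1 hYA
  exact hmul X' hX' X hX

end Local2

section Lift

variable {n : ℕ} {d : Fin n → Type*} [∀ a, Fintype (d a)] [∀ a, DecidableEq (d a)]
variable (N : Finset (Fin n))

lemma splitLift_mul (A A' : Matrix (nbhdIdx d N) (nbhdIdx d N) ℂ)
    (B B' : Matrix (nbhdCoIdx d N) (nbhdCoIdx d N) ℂ) :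
    splitLift d N A B * splitLift d N A' B' = splitLift d N (A * A') (B * B') := by
  unfold splitLift
  rw [Matrix.submatrix_mul_equiv]
  congr 1
  exact (Matrix.mul_kronecker_mul A A' B B').symm

lemma splitLift_conjTranspose (A : Matrix (nbhdIdx d N) (nbhdIdx d N) ℂ)
    (B : Matrix (nbhdCoIdx d N) (nbhdCoIdx d N) ℂ) :
    (splitLift d N A B)ᴴ = splitLift d N Aᴴ Bᴴ := by
  ext x y
  simp [splitLift, Matrix.conjTranspose_apply]

lemma splitLift_one : splitLift d N 1 1 = 1 := by
  unfold splitLift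
  have : Matrix.kroneckerMap (· * ·) (1 : Matrix (nbhdIdx d N) (nbhdIdx d N) ℂ)
      (1 : Matrix (nbhdCoIdx d N) (nbhdCoIdx d N) ℂ) = 1 := Matrix.one_kronecker_one
  rw [this, Matrix.submatrix_one_equiv]

lemma splitLift_add_left (A A' : Matrix (nbhdIdx d N) (nbhdIdx d N) ℂ)
    (B : Matrix (nbhdCoIdx d N) (nbhdCoIdx d N) ℂ) :
    splitLift d N (A + A') B = splitLift d N A B + splitLift d N A' B := by
  ext x y
  simp [splitLift, add_mul]

lemma splitLift_smul_left (c : ℂ) (A : Matrix (nbhdIdx d N) (nbhdIdx d N) ℂ)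
    (B : Matrix (nbhdCoIdx d N) (nbhdCoIdx d N) ℂ) :
    splitLift d N (c • A) B = c • splitLift d N A B := by
  ext x y
  simp [splitLift, mul_assoc]

lemma nbhdLift_mul (A A' : Matrix (nbhdIdx d N) (nbhdIdx d N) ℂ) :
    nbhdLift d N (A * A') = nbhdLift d N A * nbhdLift d N A' := by
  unfold nbhdLift
  rw [splitLift_mul, Matrix.one_mul]

lemma nbhdLift_conjTranspose (A : Matrix (nbhdIdx d N) (nbhdIdx d N) ℂ) :
    nbhdLift d N Aᴴ = (nbhdLift d N A)ᴴ := by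
  unfold nbhdLift
  rw [splitLift_conjTranspose, conjTranspose_one]

lemma nbhdLift_one : nbhdLift d N 1 = 1 := splitLift_one N

lemma nbhdLift_add (A A' : Matrix (nbhdIdx d N) (nbhdIdx d N) ℂ) :
    nbhdLift d N (A + A') = nbhdLift d N A + nbhdLift d N A' := splitLift_add_left N A A' 1

lemma nbhdLift_smul (c : ℂ) (A : Matrix (nbhdIdx d N) (nbhdIdx d N) ℂ) :
    nbhdLift d N (c • A) = c • nbhdLift d N A := splitLift_smul_left N c A 1

lemma nbhdLift_zero : nbhdLift d N 0 = 0 := by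
  have := nbhdLift_smul (d := d) N 0 0
  rwa [zero_smul, zero_smul] at this

lemma nbhdLift_sub (A A' : Matrix (nbhdIdx d N) (nbhdIdx d N) ℂ) :
    nbhdLift d N (A - A') = nbhdLift d N A - nbhdLift d N A' := by
  rw [sub_eq_add_neg, sub_eq_add_neg, nbhdLift_add, ← neg_one_smul ℂ A', nbhdLift_smul,
    neg_one_smul]

lemma nbhdLift_sum {κ : Type*} (s : Finset κ) (A : κ → Matrix (nbhdIdx d N) (nbhdIdx d N) ℂ) :
    nbhdLift d N (∑ k ∈ s, A k) = ∑ k ∈ s, nbhdLift d N (A k) := by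
  classical
  induction s using Finset.induction_on with
  | empty => simp [nbhdLift_zero]
  | insert a s ha ih => rw [Finset.sum_insert ha, Finset.sum_insert ha, nbhdLift_add, ih]

lemma nbhdLift_coLift (A : Matrix (nbhdIdx d N) (nbhdIdx d N) ℂ)
    (B : Matrix (nbhdCoIdx d N) (nbhdCoIdx d N) ℂ) :
    nbhdLift d N A * coLift d N B = coLift d N B * nbhdLift d N A := by
  unfold nbhdLift coLift
  rw [splitLift_mul, splitLift_mul]
  simp

/-- Slices of an operator. -/
def slice (N : Finset (Fin n)) (X : Matrix (∀ a, d a) (∀ a, d a) ℂ) (k l : nbhdCoIdx d N) :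
    Matrix (nbhdIdx d N) (nbhdIdx d N) ℂ :=
  X.submatrix (fun i => (splitEquiv d N).symm (i, k)) (fun j => (splitEquiv d N).symm (j, l))

lemma slice_mul (X Y : Matrix (∀ a, d a) (∀ a, d a) ℂ) (k l : nbhdCoIdx d N) :
    slice N (X * Y) k l = ∑ m, slice N X k m * slice N Y m l := by
  ext i j
  rw [Matrix.sum_apply]
  simp only [slice, Matrix.submatrix_apply, Matrix.mul_apply]
  rw [← (splitEquiv d N).symm.sum_comp, Fintype.sum_prod_type, Finset.sum_comm]

lemma slice_splitLift (A : Matrix (nbhdIdx d N) (nbhdIdx d N) ℂ)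
    (B : Matrix (nbhdCoIdx d N) (nbhdCoIdx d N) ℂ) (k l : nbhdCoIdx d N) :
    slice N (splitLift d N A B) k l = B k l • A := by
  ext i j
  simp [slice, splitLift, mul_comm]

lemma slice_ext {X Y : Matrix (∀ a, d a) (∀ a, d a) ℂ}
    (h : ∀ k l, slice N X k l = slice N Y k l) : X = Y := by
  ext x y
  have := congrFun (congrFun (h (splitEquiv d N x).2 (splitEquiv d N y).2)
    (splitEquiv d N x).1) (splitEquiv d N y).1
  simpa [slice] using this

lemma slice_lift_mul (A : Matrix (nbhdIdx d N) (nbhdIdx d N) ℂ)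
    (Y : Matrix (∀ a, d a) (∀ a, d a) ℂ) (k l : nbhdCoIdx d N) :
    slice N (nbhdLift d N A * Y) k l = A * slice N Y k l := by
  rw [slice_mul]
  simp only [nbhdLift, slice_splitLift]
  rw [Finset.sum_eq_single k]
  · simp
  · intro b _ hb
    simp [Matrix.one_apply_ne hb.symm]
  · simp

lemma slice_mul_lift (A : Matrix (nbhdIdx d N) (nbhdIdx d N) ℂ)
    (Y : Matrix (∀ a, d a) (∀ a, d a) ℂ) (k l : nbhdCoIdx d N) :
    slice N (Y * nbhdLift d N A) k l = slice N Y k l * A := by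
  rw [slice_mul]
  simp only [nbhdLift, slice_splitLift]
  rw [Finset.sum_eq_single l]
  · simp
  · intro b _ hb
    simp [Matrix.one_apply_ne hb]
  · simp

lemma slice_sum {κ : Type*} (s : Finset κ) (X : κ → Matrix (∀ a, d a) (∀ a, d a) ℂ)
    (k l : nbhdCoIdx d N) :
    slice N (∑ x ∈ s, X x) k l = ∑ x ∈ s, slice N (X x) k l := by
  ext i j
  simp [slice, Matrix.sum_apply]

lemma eq_sum_slice (X : Matrix (∀ a, d a) (∀ a, d a) ℂ) :
    X = ∑ k, ∑ l, splitLift d N (slice N X k l) (Matrix.single k l 1) := by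
  apply slice_ext N
  intro k l
  rw [slice_sum]
  simp only [slice_sum, slice_splitLift]
  rw [Finset.sum_eq_single k, Finset.sum_eq_single l]
  · simp
  · intro b _ hb
    simp [Matrix.single_apply, hb]
  · simp
  · intro b _ hb
    refine Finset.sum_eq_zero fun c _ => ?_
    simp [Matrix.single_apply, hb]
  · simp

lemma ptrace_eq (X : Matrix (∀ a, d a) (∀ a, d a) ℂ) :
    nbhdPtrace d N X = ∑ k, slice N X k k := by
  ext i j
  simp [nbhdPtrace, slice, Matrix.sum_apply]

lemma ptrace_lift_mul (A : Matrix (nbhdIdx d N) (nbhdIdx d N) ℂ)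
    (Y : Matrix (∀ a, d a) (∀ a, d a) ℂ) :
    nbhdPtrace d N (nbhdLift d N A * Y) = A * nbhdPtrace d N Y := by
  simp only [ptrace_eq, slice_lift_mul, Finset.mul_sum]

lemma ptrace_mul_lift (A : Matrix (nbhdIdx d N) (nbhdIdx d N) ℂ)
    (Y : Matrix (∀ a, d a) (∀ a, d a) ℂ) :
    nbhdPtrace d N (Y * nbhdLift d N A) = nbhdPtrace d N Y * A := by
  simp only [ptrace_eq, slice_mul_lift, Finset.sum_mul]

lemma ptrace_psd {X : Matrix (∀ a, d a) (∀ a, d a) ℂ} (hX : X.PosSemidef) :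
    (nbhdPtrace d N X).PosSemidef := by
  rw [ptrace_eq]
  exact Matrix.posSemidef_sum _ fun k _ => hX.submatrix _

lemma nbhd_data {ρ : Matrix (∀ a, d a) (∀ a, d a) ℂ} (hρ : ρ.PosSemidef)
    (hsupp : msupp ρ ≤ msupp (nbhdLift d N (nbhdPtrace d N ρ))) (hρF : ρ ∈ extF d N ρ) :
    ∃ (P : Matrix (nbhdIdx d N) (nbhdIdx d N) ℂ) (m : ℕ) (lam : Fin m → ℝ)
      (K : Fin m → Matrix (nbhdIdx d N) (nbhdIdx d N) ℂ),
      Pᴴ = P ∧ P * P = P ∧ nbhdLift d N P * ρ = ρ ∧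
      (∀ v, nbhdLift d N P *ᵥ v = v → v ∈ msupp (nbhdLift d N (nbhdPtrace d N ρ))) ∧
      (∀ k, 0 < lam k) ∧
      (∀ k, ρ * nbhdLift d N (K k) = (lam k : ℂ) • (nbhdLift d N (K k) * ρ)) ∧
      (∀ X, nbhdLift d N P * X = X → X * nbhdLift d N P = X →
        (∀ k, X * nbhdLift d N (K k) = nbhdLift d N (K k) * X) → X * ρ ∈ extF d N ρ) := by
  have hr := ptrace_psd N hρ
  obtain ⟨hp, hrp, hrpr, hprp, hs, hss, ht, htt, -⟩ := psd_package hr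
  set r := nbhdPtrace d N ρ with hrdef
  have hrh : rᴴ = r := hr.1
  set p := mpinv r with hpdef
  set s := msqrt r with hsdef
  set t := mpinv s with htdef
  have hPh : (r * p)ᴴ = r * p := by rw [conjTranspose_mul, hp, hrh, hrp]
  have hPP : (r * p) * (r * p) = r * p := by rw [← Matrix.mul_assoc, hrpr]
  have hPρ : nbhdLift d N (r * p) * ρ = ρ := by
    have hv : ∀ v, (nbhdLift d N (r * p) * ρ) *ᵥ v = ρ *ᵥ v := by
      intro v
      have h1 : ρ *ᵥ v ∈ msupp ρ := ⟨v, by rw [Matrix.mulVecLin_apply, hρ.1]⟩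
      obtain ⟨w, hw⟩ := hsupp h1
      rw [Matrix.mulVecLin_apply, ← nbhdLift_conjTranspose, hrh] at hw
      rw [← Matrix.mulVec_mulVec, ← hw, Matrix.mulVec_mulVec, ← nbhdLift_mul, hrpr]
    exact Matrix.ext_of_mulVec_single fun i => hv _
  have hρP : ρ * nbhdLift d N (r * p) = ρ := by
    have := congrArg conjTranspose hPρ
    rwa [conjTranspose_mul, hρ.1, ← nbhdLift_conjTranspose, hPh] at this
  have hPs : r * p * s = s := by
    rw [← sub_eq_zero, ← Matrix.self_mul_conjTranspose_eq_zero]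
    rw [conjTranspose_sub, conjTranspose_mul, hPh, hs]
    have : (r * p * s - s) * (s * (r * p) - s)
      = (r * p * (s * s)) * (r * p) - r * p * (s * s) - (s * s) * (r * p) + s * s := by noncomm_ring
    rw [this, hss, hrpr]
    have h3 : r * (r * p) = r := by rw [hrp, ← Matrix.mul_assoc, hrpr]
    rw [h3]; simp
  have htP : t * (r * p) = t := by
    rw [← sub_eq_zero, ← Matrix.conjTranspose_mul_self_eq_zero]
    rw [conjTranspose_sub, conjTranspose_mul, hPh, ht]
    have : (r * p * t - t) * (t * (r * p) - t)
      = (r * p * (t * t)) * (r * p) - r * p * (t * t) - (t * t) * (r * p) + t * t := by noncomm_ring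
    rw [this, htt]
    have h3 : p * (r * p) = p := by rw [← Matrix.mul_assoc, hprp]
    have h4 : r * p * p = p := by rw [hrp, hprp]
    rw [h4, h3]; simp
  -- the algebra F
  set W := nbhdSchmidt d N ρ with hW
  set F := Fdist r W with hF
  have hmemF : ∀ X, X ∈ F ↔ ∀ S ∈ {S : Submodule ℂ (Matrix (nbhdIdx d N) (nbhdIdx d N) ℂ) |
      W ⊆ S ∧ (∀ X ∈ S, Xᴴ ∈ S) ∧ (∀ X ∈ S, ∀ Y ∈ S, X * mpinv r * Y ∈ S) ∧
      (∀ X ∈ S, msqrt r * X * mpinv (msqrt r) ∈ S)}, X ∈ S := fun X => Submodule.mem_sInf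
  have hFadj : ∀ X ∈ F, Xᴴ ∈ F := fun X hX =>
    (hmemF _).2 fun S hS => hS.2.1 _ ((hmemF X).1 hX S hS)
  have hFmul : ∀ X ∈ F, ∀ Y ∈ F, X * mpinv r * Y ∈ F := fun X hX Y hY =>
    (hmemF _).2 fun S hS => hS.2.2.1 _ ((hmemF X).1 hX S hS) _ ((hmemF Y).1 hY S hS)
  have hFmod : ∀ X ∈ F, msqrt r * X * mpinv (msqrt r) ∈ F := fun X hX =>
    (hmemF _).2 fun S hS => hS.2.2.2 _ ((hmemF X).1 hX S hS)
  have hrF : r ∈ F := (hmemF _).2 fun S hS => hS.1 ⟨1, by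
    rw [show coLift d N 1 = 1 from splitLift_one N, Matrix.one_mul]⟩
  have hFP : ∀ X ∈ F, r * mpinv r * X = X := by
    intro X hX
    let S : Submodule ℂ (Matrix (nbhdIdx d N) (nbhdIdx d N) ℂ) :=
      { carrier := {X | r * p * X = X ∧ X * (r * p) = X}
        add_mem' := by
          rintro a b ⟨a1, a2⟩ ⟨b1, b2⟩
          exact ⟨by rw [Matrix.mul_add, a1, b1], by rw [Matrix.add_mul, a2, b2]⟩
        zero_mem' := ⟨by simp, by simp⟩
        smul_mem' := by
          rintro c a ⟨a1, a2⟩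
          exact ⟨by rw [Matrix.mul_smul, a1], by rw [Matrix.smul_mul, a2]⟩ }
    refine ((hmemF X).1 hX S ⟨?_, ?_, ?_, ?_⟩).1
    · rintro _ ⟨B, rfl⟩
      refine ⟨?_, ?_⟩
      · rw [← ptrace_lift_mul, ← Matrix.mul_assoc, nbhdLift_coLift, Matrix.mul_assoc, hPρ]
      · rw [← ptrace_mul_lift, Matrix.mul_assoc, hρP]
    · rintro X ⟨x1, x2⟩
      refine ⟨?_, ?_⟩
      · have := congrArg conjTranspose x2
        rwa [conjTranspose_mul, hPh] at this
      · have := congrArg conjTranspose x1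
        rwa [conjTranspose_mul, hPh] at this
    · rintro X ⟨x1, x2⟩ Y ⟨y1, y2⟩
      refine ⟨?_, ?_⟩
      · rw [← Matrix.mul_assoc, ← Matrix.mul_assoc, x1]
      · rw [Matrix.mul_assoc, y2]
    · rintro X ⟨x1, x2⟩
      refine ⟨?_, ?_⟩
      · rw [← Matrix.mul_assoc, ← Matrix.mul_assoc, hPs]
      · rw [Matrix.mul_assoc, htP]
  obtain ⟨m, lam, K, hlam, hK, hYF⟩ := local_alg hr F hrF hFadj hFmul hFmod hFP
  refine ⟨r * p, m, lam, K, hPh, hPP, hPρ, ?_, hlam, ?_, ?_⟩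
  · intro v hv
    refine ⟨nbhdLift d N p *ᵥ v, ?_⟩
    rw [Matrix.mulVecLin_apply, ← nbhdLift_conjTranspose, hrh, Matrix.mulVec_mulVec,
      ← nbhdLift_mul, hv]
  · intro k
    have : ∀ Z ∈ extF d N ρ, Z * nbhdLift d N (K k) = (lam k : ℂ) • (nbhdLift d N (K k) * Z) := by
      intro Z hZ
      unfold extF at hZ
      induction hZ using Submodule.span_induction with
      | mem x hx =>
        obtain ⟨A, hA, B, rfl⟩ := hx
        unfold nbhdLift
        rw [splitLift_mul, splitLift_mul, hK k A hA, splitLift_smul_left]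
        simp
      | zero => simp
      | add x y _ _ hx hy => rw [Matrix.mul_add, Matrix.add_mul, hx, hy, smul_add]
      | smul c x _ hx => rw [Matrix.mul_smul, Matrix.smul_mul, hx, smul_comm]
    exact this ρ hρF
  · intro X hX1 hX2 hXK
    have hsl : ∀ k l, ∀ A ∈ F, slice N X k l * A ∈ F := by
      intro k l
      apply hYF
      · rw [← slice_lift_mul, hX1]
      · rw [← slice_mul_lift, hX2]
      · intro i
        rw [← slice_lift_mul, ← slice_mul_lift, hXK]
    have : ∀ Z ∈ extF d N ρ, X * Z ∈ extF d N ρ := by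
      intro Z hZ
      unfold extF at hZ
      induction hZ using Submodule.span_induction with
      | mem x hx =>
        obtain ⟨A, hA, B, rfl⟩ := hx
        conv in X * _ => rw [eq_sum_slice N X]
        rw [Finset.sum_mul]
        refine Submodule.sum_mem _ fun k _ => ?_
        rw [Finset.sum_mul]
        refine Submodule.sum_mem _ fun l _ => ?_
        rw [splitLift_mul]
        exact Submodule.subset_span ⟨_, hsl k l A hA, _, rfl⟩
      | zero => simp
      | add x y _ _ hx hy => rw [Matrix.mul_add]; exact Submodule.add_mem _ hx hy
      | smul c x _ hx => rw [Matrix.mul_smul]; exact Submodule.smul_mem _ _ hx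
    exact this ρ hρF

end Lift

section Inv

variable {n : ℕ} {d : Fin n → Type*} [∀ a, Fintype (d a)] [∀ a, DecidableEq (d a)]

/-- Replace the coordinates in `N` of `i` by `k`. -/
def cfg (N : Finset (Fin n)) (k : nbhdIdx d N) (i : ∀ a, d a) : ∀ a, d a :=
  fun a => if h : a ∈ N then k ⟨a, h⟩ else i a

/-- Restriction of a configuration. -/
def rs (N : Finset (Fin n)) (x : ∀ a, d a) : nbhdIdx d N := fun a => x a

lemma cfg_rs (N : Finset (Fin n)) (y i : ∀ a, d a) : cfg N (rs N y) i = N.piecewise y i := by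
  funext a
  by_cases h : a ∈ N <;> simp [cfg, rs, h]

lemma rs_cfg (N : Finset (Fin n)) (k : nbhdIdx d N) (i : ∀ a, d a) : rs N (cfg N k i) = k := by
  funext a
  simp [cfg, rs]

lemma lift_mulVec (N : Finset (Fin n)) (A : Matrix (nbhdIdx d N) (nbhdIdx d N) ℂ)
    (v : (∀ a, d a) → ℂ) (i : ∀ a, d a) :
    (nbhdLift d N A *ᵥ v) i = ∑ k, A (rs N i) k * v (cfg N k i) := by
  rw [Matrix.mulVec, dotProduct, ← (splitEquiv d N).symm.sum_comp, Fintype.sum_prod_type]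
  refine Finset.sum_congr rfl fun k _ => ?_
  rw [Finset.sum_eq_single (splitEquiv d N i).2]
  · simp only [nbhdLift, splitLift, Matrix.submatrix_apply, Equiv.apply_symm_apply,
      Matrix.kroneckerMap_apply, Matrix.one_apply_eq, mul_one]
    rfl
  · intro b _ hb
    simp [nbhdLift, splitLift, Matrix.one_apply_ne hb.symm]
  · simp

/-- Multi-site matrix units. -/
noncomputable def mu (S : Finset (Fin n)) (x y : ∀ a, d a) : Matrix (∀ a, d a) (∀ a, d a) ℂ :=
  nbhdLift d S (Matrix.single (rs S x) (rs S y) 1)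

open Classical in
lemma mu_mulVec (S : Finset (Fin n)) (x y : ∀ a, d a) (v : (∀ a, d a) → ℂ) (i : ∀ a, d a) :
    (mu S x y *ᵥ v) i = if ∀ a ∈ S, i a = x a then v (S.piecewise y i) else 0 := by
  unfold mu
  rw [lift_mulVec, Finset.sum_eq_single (rs S y)]
  · rw [cfg_rs]
    have : (∀ a ∈ S, i a = x a) ↔ rs S x = rs S i := by
      constructor
      · intro h
        funext a
        exact (h a a.2).symm
      · intro h a ha
        exact (congrFun h ⟨a, ha⟩).symm
    by_cases hx : rs S x = rs S i
    · rw [if_pos (this.2 hx)]; simp [Matrix.single_apply, hx]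
    · rw [if_neg (fun h => hx (this.1 h))]; simp [Matrix.single_apply, hx]
  · intro b _ hb
    simp [Matrix.single_apply, hb.symm]
  · simp

lemma mu_comm (S N : Finset (Fin n)) (hSN : Disjoint S N) (x y : ∀ a, d a)
    (A : Matrix (nbhdIdx d N) (nbhdIdx d N) ℂ) (v : (∀ a, d a) → ℂ) :
    mu S x y *ᵥ (nbhdLift d N A *ᵥ v) = nbhdLift d N A *ᵥ (mu S x y *ᵥ v) := by
  classical
  have hS : ∀ a ∈ S, a ∉ N := fun a ha hb => Finset.disjoint_left.1 hSN ha hb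
  funext i
  rw [mu_mulVec, lift_mulVec, lift_mulVec]
  have e1 : rs N (S.piecewise y i) = rs N i := by
    funext a
    have : (a : Fin n) ∉ S := fun h => hS _ h a.2
    simp [rs, this]
  have e2 : ∀ k, cfg N k (S.piecewise y i) = S.piecewise y (cfg N k i) := by
    intro k
    funext a
    by_cases ha : a ∈ S
    · simp [cfg, ha, hS a ha]
    · simp [cfg, ha]
  have e3 : ∀ k, (∀ a ∈ S, cfg N k i a = x a) ↔ (∀ a ∈ S, i a = x a) := by
    intro k
    refine forall₂_congr fun a ha => ?_
    simp [cfg, hS a ha]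
  simp only [mu_mulVec, e1, e2, e3]
  split_ifs with h
  · rfl
  · simp

lemma mu_union (S N : Finset (Fin n)) (x y : ∀ a, d a) (v : (∀ a, d a) → ℂ) :
    mu (S ∪ N) x y *ᵥ v = mu N x y *ᵥ (mu (S \ N) x y *ᵥ v) := by
  classical
  funext i
  simp only [mu_mulVec]
  have e1 : (S \ N).piecewise y (N.piecewise y i) = (S ∪ N).piecewise y i := by
    funext a
    by_cases ha : a ∈ N <;> by_cases hb : a ∈ S <;> simp [Finset.piecewise, ha, hb]
  rw [e1]
  by_cases h : ∀ a ∈ S ∪ N, i a = x a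
  · have h2 : ∀ a ∈ N, i a = x a := fun a ha => h a (Finset.mem_union_right _ ha)
    have h3 : ∀ a ∈ S \ N, N.piecewise y i a = x a := by
      intro a ha
      rw [Finset.mem_sdiff] at ha
      simp [Finset.piecewise, ha.2, h a (Finset.mem_union_left _ ha.1)]
    rw [if_pos h, if_pos h2, if_pos h3]
  · rw [if_neg h]
    by_cases h2 : ∀ a ∈ N, i a = x a
    · rw [if_pos h2, if_neg]
      intro h3
      apply h
      intro a ha
      by_cases haN : a ∈ N
      · exact h2 a haN
      · have haS : a ∈ S := (Finset.mem_union.1 ha).resolve_right haN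
        have := h3 a (Finset.mem_sdiff.2 ⟨haS, haN⟩)
        simpa [Finset.piecewise, haN] using this
    · rw [if_neg h2]

lemma mu_sub_mul (S N : Finset (Fin n)) (x y x0 y0 : ∀ a, d a) (v : (∀ a, d a) → ℂ) :
    mu (S \ N) x y *ᵥ (mu S x0 y0 *ᵥ v) = 0 ∨
    mu (S \ N) x y *ᵥ (mu S x0 y0 *ᵥ v) = mu S ((S \ N).piecewise x x0) y0 *ᵥ v := by
  classical
  by_cases hy : ∀ a ∈ S \ N, y a = x0 a
  · right
    funext i
    simp only [mu_mulVec]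
    have e1 : S.piecewise y0 ((S \ N).piecewise y i) = S.piecewise y0 i := by
      funext a
      by_cases hb : a ∈ S <;> simp [Finset.piecewise, hb]
    rw [e1]
    by_cases h : ∀ a ∈ S, i a = (S \ N).piecewise x x0 a
    · rw [if_pos h]
      have h2 : ∀ a ∈ S \ N, i a = x a := by
        intro a ha
        have := h a (Finset.mem_sdiff.1 ha).1
        rwa [Finset.piecewise_eq_of_mem _ _ _ ha] at this
      have h3 : ∀ a ∈ S, (S \ N).piecewise y i a = x0 a := by
        intro a ha
        by_cases hs : a ∈ S \ N
        · rw [Finset.piecewise_eq_of_mem _ _ _ hs]; exact hy a hs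
        · rw [Finset.piecewise_eq_of_notMem _ _ _ hs]
          have := h a ha
          rwa [Finset.piecewise_eq_of_notMem _ _ _ hs] at this
      rw [if_pos h2, if_pos h3]
    · rw [if_neg h]
      by_cases h2 : ∀ a ∈ S \ N, i a = x a
      · rw [if_pos h2, if_neg]
        intro h3
        apply h
        intro a ha
        by_cases hs : a ∈ S \ N
        · rw [Finset.piecewise_eq_of_mem _ _ _ hs]; exact h2 a hs
        · rw [Finset.piecewise_eq_of_notMem _ _ _ hs]
          have := h3 a ha
          rwa [Finset.piecewise_eq_of_notMem _ _ _ hs] at this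
      · rw [if_neg h2]
  · left
    push Not at hy
    obtain ⟨a, ha, hya⟩ := hy
    funext i
    simp only [mu_mulVec]
    split_ifs with h2 h3
    · exfalso
      apply hya
      have := h3 a (Finset.mem_sdiff.1 ha).1
      rwa [Finset.piecewise_eq_of_mem _ _ _ ha] at this
    · rfl
    · rfl

open Classical in
lemma lift_apply (N : Finset (Fin n)) (A : Matrix (nbhdIdx d N) (nbhdIdx d N) ℂ)
    (x y : ∀ a, d a) :
    nbhdLift d N A x y = if ∀ a, a ∉ N → x a = y a then A (rs N x) (rs N y) else 0 := by
  have : (∀ a, a ∉ N → x a = y a) ↔ (splitEquiv d N x).2 = (splitEquiv d N y).2 := by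
    constructor
    · intro h
      funext a
      exact h a a.2
    · intro h a ha
      exact congrFun h ⟨a, ha⟩
  by_cases h : (splitEquiv d N x).2 = (splitEquiv d N y).2
  · rw [if_pos (this.2 h)]
    have e : (1 : Matrix (nbhdCoIdx d N) (nbhdCoIdx d N) ℂ) (splitEquiv d N x).2
        (splitEquiv d N y).2 = 1 := by rw [h, Matrix.one_apply_eq]
    change A (rs N x) (rs N y) * (1 : Matrix (nbhdCoIdx d N) (nbhdCoIdx d N) ℂ)
      (splitEquiv d N x).2 (splitEquiv d N y).2 = _
    rw [e, mul_one]
  · rw [if_neg (fun h' => h (this.1 h'))]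
    simp [nbhdLift, splitLift, Matrix.one_apply_ne h]

lemma lift_mono {N S : Finset (Fin n)} (h : N ⊆ S) (A : Matrix (nbhdIdx d N) (nbhdIdx d N) ℂ) :
    ∃ A' : Matrix (nbhdIdx d S) (nbhdIdx d S) ℂ, nbhdLift d N A = nbhdLift d S A' := by
  classical
  refine ⟨Matrix.of fun i j => if ∀ a : {x // x ∈ S}, (a : Fin n) ∉ N → i a = j a then
    A (fun a => i ⟨a, h a.2⟩) (fun a => j ⟨a, h a.2⟩) else 0, ?_⟩
  ext x y
  rw [lift_apply, lift_apply, Matrix.of_apply]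
  by_cases h1 : ∀ a, a ∉ N → x a = y a
  · rw [if_pos h1, if_pos (fun a ha => h1 a (fun hb => ha (h hb)))]
    have h3 : ∀ a : {x // x ∈ S}, (a : Fin n) ∉ N → rs S x a = rs S y a := fun a ha => h1 a ha
    rw [if_pos h3]
    rfl
  · rw [if_neg h1]
    by_cases h2 : ∀ a, a ∉ S → x a = y a
    · rw [if_pos h2, if_neg]
      intro h3
      apply h1
      intro a ha
      by_cases hs : a ∈ S
      · exact h3 ⟨a, hs⟩ ha
      · exact h2 a hs
    · rw [if_neg h2]

lemma lift_ptrace_zero {N S : Finset (Fin n)} (h : N ⊆ S)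
    (A : Matrix (nbhdIdx d N) (nbhdIdx d N) ℂ) (ρ : Matrix (∀ a, d a) (∀ a, d a) ℂ)
    (hA : nbhdLift d N A * ρ = 0) :
    nbhdLift d N A * nbhdLift d S (nbhdPtrace d S ρ) = 0 := by
  obtain ⟨A', hA'⟩ := lift_mono h A
  rw [hA'] at hA ⊢
  rw [← nbhdLift_mul, ← ptrace_lift_mul, hA]
  have : nbhdPtrace d S (0 : Matrix (∀ a, d a) (∀ a, d a) ℂ) = 0 := by
    ext i j; simp [nbhdPtrace]
  rw [this, nbhdLift_zero]

lemma trace_ptrace (S : Finset (Fin n)) (ρ : Matrix (∀ a, d a) (∀ a, d a) ℂ) :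
    (nbhdPtrace d S ρ).trace = ρ.trace := by
  simp only [Matrix.trace, Matrix.diag, nbhdPtrace, Matrix.of_apply]
  rw [← (splitEquiv d S).symm.sum_comp, Fintype.sum_prod_type]

lemma inv_subspace {M : ℕ} (Nb : Fin M → Finset (Fin n))
    (P : ∀ j, Matrix (nbhdIdx d (Nb j)) (nbhdIdx d (Nb j)) ℂ)
    (ρ : Matrix (∀ a, d a) (∀ a, d a) ℂ) (hρ : ρ.trace = 1)
    (hP : ∀ j, nbhdLift d (Nb j) (P j) * ρ = ρ)
    (V : Submodule ℂ ((∀ a, d a) → ℂ)) (hV0 : V ≠ ⊥)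
    (hV : ∀ j, ∀ A : Matrix (nbhdIdx d (Nb j)) (nbhdIdx d (Nb j)) ℂ, ∀ v ∈ V, nbhdLift d (Nb j) (A * (1 - P j)) *ᵥ v ∈ V) :
    ∃ v ∈ V, v ≠ 0 ∧ ∀ j, nbhdLift d (Nb j) (P j) *ᵥ v = v := by
  classical
  let good : Finset (Finset (Fin n)) :=
    Finset.univ.filter fun S => ∃ v : (∀ a, d a) → ℂ, v ≠ 0 ∧ ∀ x y, mu S x y *ᵥ v ∈ V
  have hne : good.Nonempty := by
    obtain ⟨v, hv, hv0⟩ := (Submodule.ne_bot_iff V).1 hV0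
    refine ⟨∅, Finset.mem_filter.2 ⟨Finset.mem_univ _, v, hv0, fun x y => ?_⟩⟩
    have : mu ∅ x y *ᵥ v = v := by
      funext i
      rw [mu_mulVec]
      simp
    rwa [this]
  obtain ⟨S, hS, hmax⟩ := Finset.exists_max_image good Finset.card hne
  obtain ⟨-, v, hv0, hv⟩ := Finset.mem_filter.1 hS
  have hcl : ∀ j, ¬ Nb j ⊆ S → ∀ x y, nbhdLift d (Nb j) (1 - P j) *ᵥ (mu S x y *ᵥ v) = 0 := by
    intro j hj x0 y0
    by_contra hne0
    have hmem : S ∪ Nb j ∈ good := by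
      refine Finset.mem_filter.2 ⟨Finset.mem_univ _, _, hne0, fun x y => ?_⟩
      rw [mu_union, mu_comm _ _ Finset.sdiff_disjoint]
      have hu : mu (S \ Nb j) x y *ᵥ (mu S x0 y0 *ᵥ v) ∈ V := by
        rcases mu_sub_mul S (Nb j) x y x0 y0 v with h | h
        · rw [h]; exact V.zero_mem
        · rw [h]; exact hv _ _
      have := hV j (Matrix.single (rs (Nb j) x) (rs (Nb j) y) 1) _ hu
      rw [nbhdLift_mul, ← Matrix.mulVec_mulVec] at this
      exact this
    have h1 := hmax _ hmem
    have h2 : S.card < (S ∪ Nb j).card := by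
      apply Finset.card_lt_card
      refine ⟨Finset.subset_union_left, fun h => hj ?_⟩
      exact (Finset.subset_union_right).trans h
    omega
  -- pick entries
  obtain ⟨i0, hi0⟩ : ∃ i, v i ≠ 0 := by
    by_contra h
    push Not at h
    exact hv0 (funext h)
  set r := nbhdPtrace d S ρ with hr
  obtain ⟨c, a, hca⟩ : ∃ c a, r c a ≠ 0 := by
    by_contra h
    push Not at h
    have h0 : r = 0 := by ext c a; exact h c a
    have := trace_ptrace S ρ
    rw [← hr, h0, hρ] at this
    simp at this
  have hexp : ∀ w : (∀ a, d a) → ℂ, nbhdLift d S r *ᵥ (mu S (cfg S a i0) i0 *ᵥ w)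
      = ∑ x, r x a • (mu S (cfg S x i0) i0 *ᵥ w) := by
    intro w
    have e : r * Matrix.single a (rs S i0) (1 : ℂ)
        = ∑ x, r x a • Matrix.single x (rs S i0) (1 : ℂ) := by
      ext p q
      rw [Matrix.sum_apply]
      by_cases hq : q = rs S i0
      · subst hq
        simp [Matrix.single_apply]
      · have hq2 : rs S i0 ≠ q := fun h => hq h.symm
        simp [Matrix.single_apply, hq, hq2]
    unfold mu
    rw [Matrix.mulVec_mulVec, ← nbhdLift_mul, rs_cfg, e, nbhdLift_sum, Matrix.sum_mulVec]
    refine Finset.sum_congr rfl fun x _ => ?_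
    rw [nbhdLift_smul, Matrix.smul_mulVec, rs_cfg]
  have hone : ∀ j (u : (∀ a, d a) → ℂ), nbhdLift d (Nb j) (1 - P j) *ᵥ u = 0 →
      nbhdLift d (Nb j) (P j) *ᵥ u = u := by
    intro j u hu
    rw [nbhdLift_sub, nbhdLift_one, Matrix.sub_mulVec, Matrix.one_mulVec, sub_eq_zero] at hu
    exact hu.symm
  refine ⟨nbhdLift d S r *ᵥ (mu S (cfg S a i0) i0 *ᵥ v), ?_, ?_, ?_⟩
  · rw [hexp]
    exact Submodule.sum_mem _ fun x _ => Submodule.smul_mem _ _ (hv _ _)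
  · intro h0
    have := congrFun h0 (cfg S c i0)
    rw [lift_mulVec, rs_cfg, Finset.sum_eq_single a] at this
    · rw [mu_mulVec, if_pos] at this
      · have e : S.piecewise i0 (cfg S a (cfg S c i0)) = i0 := by
          funext b
          by_cases hb : b ∈ S <;> simp [Finset.piecewise, cfg, hb]
        rw [e] at this
        exact (mul_ne_zero hca hi0) this
      · intro b hb
        simp [cfg, hb]
    · intro b _ hb
      rw [mu_mulVec, if_neg, mul_zero]
      intro h
      apply hb
      funext z
      have := h z z.2
      simpa [cfg] using this
    · simp
  · intro j
    apply hone
    by_cases hj : Nb j ⊆ S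
    · rw [Matrix.mulVec_mulVec, lift_ptrace_zero hj, Matrix.zero_mulVec]
      rw [nbhdLift_sub, nbhdLift_one, Matrix.sub_mul, Matrix.one_mul, hP j, sub_self]
    · rw [hexp, Matrix.mulVec_sum]
      refine Finset.sum_eq_zero fun x _ => ?_
      rw [Matrix.mulVec_smul, hcl j hj, smul_zero]

end Inv

section Final

lemma lindblad_eq_dS {ι κ : Type*} [Fintype ι] [DecidableEq ι] [Fintype κ]
    (R : κ → Matrix ι ι ℂ) (X : Matrix ι ι ℂ) :
    lindbladMap 0 (fun k : Fin (Fintype.card κ) => R ((Fintype.equivFin κ).symm k)) X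
      = dS R X := by
  unfold lindbladMap dS
  simp only [LinearMap.add_apply, LinearMap.smul_apply, LinearMap.sub_apply,
    LinearMap.mulLeft_apply, LinearMap.mulRight_apply, Matrix.zero_mul, Matrix.mul_zero, sub_self,
    smul_zero, zero_add, LinearMap.sum_apply, LinearMap.comp_apply]
  exact (Fintype.equivFin κ).symm.sum_comp (fun k => R k * X * (R k)ᴴ -
    ((1:ℂ)/2) • ((R k)ᴴ * R k * X + X * ((R k)ᴴ * R k)))

lemma dS_sigma {ι : Type*} [Fintype ι] [DecidableEq ι] {J : Type*} [Fintype J] {κ : J → Type*}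
    [∀ j, Fintype (κ j)] (R : (Σ j, κ j) → Matrix ι ι ℂ) (X : Matrix ι ι ℂ) :
    dS R X = ∑ j, dS (fun k : κ j => R ⟨j, k⟩) X := by
  unfold dS
  rw [Fintype.sum_sigma]

lemma pair_zero {ι : Type*} [Fintype ι] [DecidableEq ι] {ρ K : Matrix ι ι ℂ} {l : ℝ} (hl : 0 < l)
    (hρ : ρᴴ = ρ) (hK : ρ * K = (l : ℂ) • (K * ρ)) :
    ((((Real.sqrt l : ℝ) : ℂ) • K) * ρ * (((Real.sqrt l : ℝ) : ℂ) • K)ᴴ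
      - ((1:ℂ)/2) • ((((Real.sqrt l : ℝ) : ℂ) • K)ᴴ * (((Real.sqrt l : ℝ) : ℂ) • K) * ρ
        + ρ * ((((Real.sqrt l : ℝ) : ℂ) • K)ᴴ * (((Real.sqrt l : ℝ) : ℂ) • K))))
    + (Kᴴ * ρ * Kᴴᴴ - ((1:ℂ)/2) • (Kᴴᴴ * Kᴴ * ρ + ρ * (Kᴴᴴ * Kᴴ))) = 0 := by
  have hK2 : Kᴴ * ρ = (l : ℂ) • (ρ * Kᴴ) := by
    have := congrArg conjTranspose hK
    rw [conjTranspose_mul, conjTranspose_smul, conjTranspose_mul, hρ] at this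
    simpa using this
  have hc : (((Real.sqrt l : ℝ) : ℂ)) * ((Real.sqrt l : ℝ) : ℂ) = (l : ℂ) := by
    rw [← Complex.ofReal_mul, Real.mul_self_sqrt hl.le]
  have hst : star (((Real.sqrt l : ℝ) : ℂ)) = ((Real.sqrt l : ℝ) : ℂ) := Complex.conj_ofReal _
  rw [conjTranspose_conjTranspose, conjTranspose_smul, hst]
  simp only [Matrix.smul_mul, Matrix.mul_smul, smul_smul, hc]
  have e1 : Kᴴ * K * ρ = (l : ℂ)⁻¹ • (Kᴴ * ρ * K) := by
    have hl0 : (l : ℂ) ≠ 0 := by exact_mod_cast hl.ne'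
    rw [Matrix.mul_assoc, Matrix.mul_assoc, hK, Matrix.mul_smul, smul_smul, inv_mul_cancel₀ hl0,
      one_smul]
  have e2 : ρ * (Kᴴ * K) = (l : ℂ)⁻¹ • (Kᴴ * ρ * K) := by
    have hl0 : (l : ℂ) ≠ 0 := by exact_mod_cast hl.ne'
    rw [hK2, Matrix.smul_mul, smul_smul, inv_mul_cancel₀ hl0, one_smul, Matrix.mul_assoc]
  have e3 : K * Kᴴ * ρ = (l : ℂ) • (K * ρ * Kᴴ) := by
    rw [Matrix.mul_assoc, hK2, Matrix.mul_smul, Matrix.mul_assoc]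
  have e4 : ρ * (K * Kᴴ) = (l : ℂ) • (K * ρ * Kᴴ) := by
    rw [← Matrix.mul_assoc, hK, Matrix.smul_mul]
  have hl0 : (l : ℂ) ≠ 0 := by exact_mod_cast hl.ne'
  rw [e1, e2, e3, e4]
  simp only [smul_smul, mul_inv_cancel₀ hl0, one_smul]
  module

lemma kill_zero {ι : Type*} [Fintype ι] [DecidableEq ι] {ρ D : Matrix ι ι ℂ}
    (hρ : ρᴴ = ρ) (hD : D * ρ = 0) :
    D * ρ * Dᴴ - ((1:ℂ)/2) • (Dᴴ * D * ρ + ρ * (Dᴴ * D)) = 0 := by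
  have h2 : ρ * Dᴴ = 0 := by
    have := congrArg conjTranspose hD
    rwa [conjTranspose_mul, hρ, conjTranspose_zero] at this
  rw [hD, Matrix.mul_assoc Dᴴ, hD, ← Matrix.mul_assoc, h2]
  simp

lemma supp_fix {ι : Type*} [Fintype ι] [DecidableEq ι] {ρ Q Z : Matrix ι ι ℂ} (hρ : ρᴴ = ρ)
    (hQ : Q * ρ = ρ) (hZ : ∀ v, Z *ᵥ v ∈ msupp ρ) : Q * Z = Z := by
  refine Matrix.ext_of_mulVec_single fun i => ?_
  obtain ⟨w, hw⟩ := hZ (Pi.single i 1)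
  rw [Matrix.mulVecLin_apply, hρ] at hw
  rw [← Matrix.mulVec_mulVec, ← hw, Matrix.mulVec_mulVec, hQ]

/-- Index set of the local noise operators. -/
abbrev noiseIdx {n : ℕ} (d : Fin n → Type*) (N : Finset (Fin n)) (m : ℕ) :=
  Fin m ⊕ (Fin m ⊕ (nbhdIdx d N × nbhdIdx d N))

/-- Local noise operators. -/
noncomputable def noise {n : ℕ} {d : Fin n → Type*} [∀ a, Fintype (d a)] [∀ a, DecidableEq (d a)]
    (N : Finset (Fin n)) {m : ℕ} (P : Matrix (nbhdIdx d N) (nbhdIdx d N) ℂ) (lam : Fin m → ℝ)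
    (K : Fin m → Matrix (nbhdIdx d N) (nbhdIdx d N) ℂ) :
    noiseIdx d N m → Matrix (nbhdIdx d N) (nbhdIdx d N) ℂ
  | Sum.inl k => ((Real.sqrt (lam k) : ℝ) : ℂ) • K k
  | Sum.inr (Sum.inl k) => (K k)ᴴ
  | Sum.inr (Sum.inr ab) => Matrix.single ab.1 ab.2 1 * (1 - P)

lemma main_thm
    {n : ℕ} {d : Fin n → Type*} [∀ a, Fintype (d a)] [∀ a, DecidableEq (d a)]
    {M : ℕ} (Nb : Fin M → Finset (Fin n))
    (ρ : Matrix (∀ a, d a) (∀ a, d a) ℂ) (hρ : IsDensity ρ)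
    (h1 : Submodule.span ℂ {ρ} = ⨅ j, extF d (Nb j) ρ)
    (h2 : msupp ρ = ⨅ j, msupp (nbhdLift d (Nb j) (nbhdPtrace d (Nb j) ρ))) :
    IsFFQLS d Nb ρ := by
  have hρh : ρᴴ = ρ := hρ.1.1
  have hsupp : ∀ j, msupp ρ ≤ msupp (nbhdLift d (Nb j) (nbhdPtrace d (Nb j) ρ)) := by
    intro j
    rw [h2]
    exact iInf_le _ j
  have hρF : ∀ j, ρ ∈ extF d (Nb j) ρ := by
    intro j
    have : ρ ∈ ⨅ j, extF d (Nb j) ρ := by rw [← h1]; exact Submodule.mem_span_singleton_self ρ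
    exact (Submodule.mem_iInf _).1 this j
  choose P m lam K hPh hPP hPρ hPsupp hlam hK hX using
    fun j => nbhd_data (Nb j) hρ.1 (hsupp j) (hρF j)
  obtain ⟨hp, hrp, hrpr, hprp, -⟩ := psd_package hρ.1
  set q := mpinv ρ with hq
  let R : (Σ j, noiseIdx d (Nb j) (m j)) → Matrix (∀ a, d a) (∀ a, d a) ℂ :=
    fun x => nbhdLift d (Nb x.1) (noise (Nb x.1) (P x.1) (lam x.1) (K x.1) x.2)
  have hR1 : ∀ j k, R ⟨j, Sum.inl k⟩
      = ((Real.sqrt (lam j k) : ℝ) : ℂ) • nbhdLift d (Nb j) (K j k) :=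
    fun j k => nbhdLift_smul _ _ _
  have hR2 : ∀ j k, R ⟨j, Sum.inr (Sum.inl k)⟩ = (nbhdLift d (Nb j) (K j k))ᴴ :=
    fun j k => nbhdLift_conjTranspose _ _
  have hR3 : ∀ j ab, R ⟨j, Sum.inr (Sum.inr ab)⟩
      = nbhdLift d (Nb j) (Matrix.single ab.1 ab.2 1 * (1 - P j)) := fun j ab => rfl
  have hDρ : ∀ j ab, R ⟨j, Sum.inr (Sum.inr ab)⟩ * ρ = 0 := by
    intro j ab
    rw [hR3, nbhdLift_mul, nbhdLift_sub, nbhdLift_one, Matrix.mul_assoc, Matrix.sub_mul,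
      Matrix.one_mul, hPρ, sub_self, Matrix.mul_zero]
  have hc0 : ∀ j k, ((Real.sqrt (lam j k) : ℝ) : ℂ) ≠ 0 := by
    intro j k
    exact_mod_cast (Real.sqrt_pos.2 (hlam j k)).ne'
  let Lj : Fin M → (Matrix (∀ a, d a) (∀ a, d a) ℂ →ₗ[ℂ] Matrix (∀ a, d a) (∀ a, d a) ℂ) :=
    fun j => lindbladMap (nbhdLift d (Nb j) 0)
      (fun k : Fin (Fintype.card (noiseIdx d (Nb j) (m j))) => nbhdLift d (Nb j)
        (noise (Nb j) (P j) (lam j) (K j) ((Fintype.equivFin (noiseIdx d (Nb j) (m j))).symm k)))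
  have hLj : ∀ j X, Lj j X = dS (fun k => R ⟨j, k⟩) X := by
    intro j X
    change lindbladMap (nbhdLift d (Nb j) 0) _ X = _
    rw [nbhdLift_zero]
    exact lindblad_eq_dS (fun k => R ⟨j, k⟩) X
  have hL : ∀ X, (∑ j, Lj j) X = dS R X := by
    intro X
    rw [dS_sigma, LinearMap.sum_apply]
    exact Finset.sum_congr rfl fun j _ => hLj j X
  have hLjρ : ∀ j, Lj j ρ = 0 := by
    intro j
    rw [hLj, dS, Fintype.sum_sum_type, Fintype.sum_sum_type, ← add_assoc,
      ← Finset.sum_add_distrib]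
    rw [Finset.sum_eq_zero, Finset.sum_eq_zero, add_zero]
    · intro ab _
      exact kill_zero hρh (hDρ j ab)
    · intro k _
      rw [hR1, hR2]
      exact pair_zero (hlam j k) hρh (hK j k)
  have hinv : dS R ρ = 0 := by
    rw [← hL, LinearMap.sum_apply]
    exact Finset.sum_eq_zero fun j _ => hLjρ j
  -- H1
  have H1 : ∀ V : Submodule ℂ ((∀ a, d a) → ℂ), V ≠ ⊥ → (∀ v ∈ V, ∀ k, R k *ᵥ v ∈ V) →
      ∃ v ∈ V, v ≠ 0 ∧ ∃ w, v = ρ *ᵥ w := by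
    intro V hV0 hV
    obtain ⟨v, hvV, hv0, hv⟩ := inv_subspace Nb P ρ hρ.2 hPρ V hV0 (by
      intro j A v hv
      have e : A * (1 - P j) = ∑ a, ∑ b, A a b • (Matrix.single a b 1 * (1 - P j)) := by
        conv_lhs => rw [Matrix.matrix_eq_sum_single A]
        rw [Finset.sum_mul]
        refine Finset.sum_congr rfl fun a _ => ?_
        rw [Finset.sum_mul]
        refine Finset.sum_congr rfl fun b _ => ?_
        rw [← Matrix.smul_mul, Matrix.smul_single, smul_eq_mul, mul_one]
      rw [e, nbhdLift_sum, Matrix.sum_mulVec]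
      refine Submodule.sum_mem _ fun a _ => ?_
      rw [nbhdLift_sum, Matrix.sum_mulVec]
      refine Submodule.sum_mem _ fun b _ => ?_
      rw [nbhdLift_smul, Matrix.smul_mulVec]
      exact Submodule.smul_mem _ _ (hV v hv ⟨j, Sum.inr (Sum.inr (a, b))⟩))
    have hvs : v ∈ msupp ρ := by
      rw [h2, Submodule.mem_iInf]
      exact fun j => hPsupp j v (hv j)
    obtain ⟨w, hw⟩ := hvs
    rw [Matrix.mulVecLin_apply, hρh] at hw
    exact ⟨v, hvV, hv0, w, hw.symm⟩
  -- H2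
  have hQh : (ρ * q)ᴴ = ρ * q := by rw [conjTranspose_mul, hp, hρh, hrp]
  have hD : ∀ Y : Matrix (∀ a, d a) (∀ a, d a) ℂ, (∀ k, (R k * Y - Y * R k) * ρ = 0) →
      (∀ j, nbhdLift d (Nb j) (P j) * (Y * ρ) = Y * ρ) ∧ (ρ * q) * (Y * ρ) = Y * ρ := by
    intro Y hY
    have ha : ∀ j, nbhdLift d (Nb j) (P j) * (Y * ρ) = Y * ρ := by
      intro j
      have hone : (1 - P j) = ∑ a, Matrix.single a a (1 : ℂ) * (1 - P j) := by
        rw [← Finset.sum_mul, Matrix.sum_single_one, Matrix.one_mul]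
      have h0 : nbhdLift d (Nb j) (1 - P j) * (Y * ρ) = 0 := by
        rw [hone, nbhdLift_sum, Finset.sum_mul]
        refine Finset.sum_eq_zero fun a _ => ?_
        have := hY ⟨j, Sum.inr (Sum.inr (a, a))⟩
        rw [Matrix.sub_mul, Matrix.mul_assoc Y, hDρ, Matrix.mul_zero, sub_zero, hR3,
          Matrix.mul_assoc] at this
        exact this
      rw [nbhdLift_sub, nbhdLift_one, Matrix.sub_mul, Matrix.one_mul, sub_eq_zero] at h0
      exact h0.symm
    refine ⟨ha, supp_fix hρh hrpr fun v => ?_⟩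
    rw [h2, Submodule.mem_iInf]
    intro j
    apply hPsupp
    rw [Matrix.mulVec_mulVec, ha]
  have H2 : ∀ Y : Matrix (∀ a, d a) (∀ a, d a) ℂ, (∀ k, (R k * Y - Y * R k) * ρ = 0) →
      (∀ k, (R k * Yᴴ - Yᴴ * R k) * ρ = 0) → ∃ c : ℂ, Y * ρ = c • ρ := by
    intro Y hY hY2
    obtain ⟨hPY, hQY⟩ := hD Y hY
    obtain ⟨-, hQY2⟩ := hD Yᴴ hY2
    have hQQ : ∀ Z : Matrix (∀ a, d a) (∀ a, d a) ℂ, (ρ * q) * (Z * ρ) = Z * ρ →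
        (ρ * q) * (Zᴴ * ρ) = Zᴴ * ρ → Z * (ρ * q) = (ρ * q) * Z := by
      intro Z hz1 hz2
      have e1 : (ρ * q) * Z * (ρ * q) = Z * (ρ * q) := by
        calc (ρ * q) * Z * (ρ * q) = ((ρ * q) * (Z * ρ)) * q := by simp only [Matrix.mul_assoc]
          _ = _ := by rw [hz1, Matrix.mul_assoc]
      have e2 : (ρ * q) * Zᴴ * (ρ * q) = Zᴴ * (ρ * q) := by
        calc (ρ * q) * Zᴴ * (ρ * q) = ((ρ * q) * (Zᴴ * ρ)) * q := by simp only [Matrix.mul_assoc]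
          _ = _ := by rw [hz2, Matrix.mul_assoc]
      have e3 := congrArg conjTranspose e2
      rw [conjTranspose_mul (ρ * q * Zᴴ), conjTranspose_mul (ρ * q) Zᴴ,
        conjTranspose_mul Zᴴ (ρ * q), conjTranspose_conjTranspose, hQh, ← Matrix.mul_assoc] at e3
      rw [← e1, e3]
    have hYQ : Y * (ρ * q) = (ρ * q) * Y := hQQ Y hQY hQY2
    have hmem : Y * ρ ∈ ⨅ j, extF d (Nb j) ρ := by
      rw [Submodule.mem_iInf]
      intro j
      have key := hX j (Y * (ρ * q)) (by rw [← Matrix.mul_assoc Y, ← Matrix.mul_assoc, hPY])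
        (by
          have : ρ * q * nbhdLift d (Nb j) (P j) = ρ * q := by
            have h3 : nbhdLift d (Nb j) (P j) * (ρ * q) = ρ * q := by
              rw [← Matrix.mul_assoc, hPρ]
            have h4 := congrArg conjTranspose h3
            rwa [conjTranspose_mul, hQh, ← nbhdLift_conjTranspose, hPh] at h4
          rw [Matrix.mul_assoc, this])
        (by
          intro k
          have hk := hK j k
          have hl0 : (lam j k : ℂ) ≠ 0 := by exact_mod_cast (hlam j k).ne'
          have hYK := hY ⟨j, Sum.inl k⟩
          rw [hR1, Matrix.smul_mul, Matrix.mul_smul, ← smul_sub, Matrix.smul_mul,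
            smul_eq_zero] at hYK
          have hYK := hYK.resolve_left (hc0 j k)
          rw [Matrix.sub_mul, sub_eq_zero] at hYK
          set k1 := nbhdLift d (Nb j) (K j k)
          have hk2 : k1ᴴ * ρ = (lam j k : ℂ) • (ρ * k1ᴴ) := by
            have := congrArg conjTranspose hk
            rw [conjTranspose_mul, conjTranspose_smul, conjTranspose_mul, hρh] at this
            simpa using this
          have hk3 : k1 * ρ = (lam j k : ℂ)⁻¹ • (ρ * k1) := by
            rw [hk, smul_smul, inv_mul_cancel₀ hl0, one_smul]
          have hkQ : k1 * (ρ * q) = (ρ * q) * k1 := by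
            apply hQQ
            · rw [hk3, Matrix.mul_smul, ← Matrix.mul_assoc, hrpr]
            · rw [hk2, Matrix.mul_smul, ← Matrix.mul_assoc, hrpr]
          calc Y * (ρ * q) * k1 = Y * (k1 * (ρ * q)) := by rw [hkQ, Matrix.mul_assoc]
            _ = (Y * k1 * ρ) * q := by simp only [Matrix.mul_assoc]
            _ = (k1 * Y * ρ) * q := by rw [hYK]
            _ = _ := by simp only [Matrix.mul_assoc])
      rwa [Matrix.mul_assoc, hrpr] at key
    rw [← h1, Submodule.mem_span_singleton] at hmem
    obtain ⟨c, hc⟩ := hmem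
    exact ⟨c, hc.symm⟩
  have H3 : ∀ k, R k * ρ = 0 ∨ ∃ (c : ℂ) (k' : Σ j, noiseIdx d (Nb j) (m j)),
      (R k)ᴴ = c • R k' := by
    rintro ⟨j, k | k | ab⟩
    · right
      refine ⟨star ((Real.sqrt (lam j k) : ℝ) : ℂ), ⟨j, Sum.inr (Sum.inl k)⟩, ?_⟩
      rw [hR1, hR2, conjTranspose_smul]
    · right
      refine ⟨((Real.sqrt (lam j k) : ℝ) : ℂ)⁻¹, ⟨j, Sum.inl k⟩, ?_⟩
      rw [hR1, hR2, conjTranspose_conjTranspose, smul_smul, inv_mul_cancel₀ (hc0 j k), one_smul]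
    · left
      exact hDρ j ab
  have hgas : IsGAS (∑ j, Lj j) ρ := gas_of R _ hL ρ hρ hinv
    (fun Y μ => spectral_gap R ρ hρ hinv H1 H2 H3 Y μ)
  refine ⟨Lj, fun j => ⟨0, Matrix.isHermitian_zero, _, _, rfl⟩, ?_, hgas⟩
  intro σ hσ hσ0 j
  have : σ = ρ := by
    ext a b
    have := hgas.2 σ hσ (fun _ => σ) rfl (fun t i j => by
      rw [hσ0]
      exact hasDerivAt_const t (σ i j)) a b
    exact tendsto_nhds_unique tendsto_const_nhds this
  rw [this]
  exact hLjρ j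

end Final

/-! ### Statement 12 -/

theorem stmt12
    {n : ℕ} {d : Fin n → Type*} [∀ a, Fintype (d a)] [∀ a, DecidableEq (d a)]
    {M : ℕ} (Nb : Fin M → Finset (Fin n))
    (ρ : Matrix (∀ a, d a) (∀ a, d a) ℂ) (hρ : IsDensity ρ)
    (h1 : Submodule.span ℂ {ρ} = ⨅ j, extF d (Nb j) ρ)
    (h2 : msupp ρ = ⨅ j, msupp (nbhdLift d (Nb j) (nbhdPtrace d (Nb j) ρ))) :
    IsFFQLS d Nb ρ := by
  exact main_thm Nb ρ hρ h1 h2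

end QDS
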